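/- arXiv:2503.10251 — 5 statements merged into one kernel-verified Lean document; each statement's English description precedes it below -/
import Mathlib

section
/- Let d ≥ 2 and W_q, W_k, W_v ∈ ℝ^{d×d} with W_kᵀW_q non-singular. Let X ∈ ℝ^{d×n} be such that A(X) has all entries nonzero. Then there exists 0 < β* ≤ 1 such that for each fixed 0 ≤ β < β* and every X̂ ∈ ℝ^{d×n} with ρ_c(X̂, X) ≤ β/κ_{c,c}(A, X), and for all sufficiently small u: ρ_c( fl(A(X̂)), A(X) ) ≤ ξ(A, X) · ( 1 + (4/√d) σ_max(|W_k|ᵀ|W_q|) · (σ_max(W_kᵀW_q)/σ_min(W_kᵀW_q)) · max_{1≤t≤n}‖x_t‖₂² ) · ( (2n + 3d) u + ρ_c(X̂, X) ) + C·(u² + ρ_c(X̂, X)²) for a constant C independent of u and X̂, where ξ(A, X) = max_{i,t} (|e_iᵀW_v||X_t|ψ(S(X_t)))/|e_iᵀW_v X_t ψ(S(X_t))| ≥ 1 and x_t denotes the t-th column of X. -/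
open scoped BigOperators ENNReal

noncomputable section

namespace TR

/-! ### Norms and basic quantities -/

/-- Euclidean (ℓ₂) norm of a vector. -/
def l2 {d : ℕ} (x : Fin d → ℝ) : ℝ := Real.sqrt (∑ i, x i ^ 2)

/-- ℓ_∞ norm of a vector. -/
def linf {d : ℕ} (x : Fin d → ℝ) : ℝ := ⨆ i, |x i|

/-- "ℓ_{−∞}" functional: the minimal absolute value of the entries. -/
def lminf {d : ℕ} (x : Fin d → ℝ) : ℝ := ⨅ i, |x i|

/-- ℓ₁ norm of a vector. -/
def l1 {d : ℕ} (x : Fin d → ℝ) : ℝ := ∑ i, |x i|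

/-- γ_k = k u / (1 − k u). -/
def gam (k : ℕ) (u : ℝ) : ℝ := (k : ℝ) * u / (1 - (k : ℝ) * u)

/-- entrywise absolute value of a matrix. -/
def matAbs {a b : ℕ} (B : Matrix (Fin a) (Fin b) ℝ) : Matrix (Fin a) (Fin b) ℝ :=
  Matrix.of fun i j => |B i j|

/-- largest singular value: supremum of ‖Bx‖₂ over ℓ₂-unit vectors. -/
def sigmaMax {d : ℕ} (B : Matrix (Fin d) (Fin d) ℝ) : ℝ :=
  ⨆ x : {x : Fin d → ℝ // l2 x = 1}, l2 (fun i => ∑ j, B i j * x.1 j)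

/-- smallest singular value: infimum of ‖Bx‖₂ over ℓ₂-unit vectors. -/
def sigmaMin {d : ℕ} (B : Matrix (Fin d) (Fin d) ℝ) : ℝ :=
  ⨅ x : {x : Fin d → ℝ // l2 x = 1}, l2 (fun i => ∑ j, B i j * x.1 j)

/-- matrix (1,∞) operator norm: max of absolute values of entries. -/
def norm1inf {a b : ℕ} (B : Matrix (Fin a) (Fin b) ℝ) : ℝ := ⨆ p : Fin a × Fin b, |B p.1 p.2|

/-- matrix (∞,∞) operator norm: max row ℓ₁ norm. -/
def norminfinf {a b : ℕ} (B : Matrix (Fin a) (Fin b) ℝ) : ℝ := ⨆ i, ∑ j, |B i j|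

/-- matrix (1,1) operator norm: max column ℓ₁ norm. -/
def norm11 {a b : ℕ} (B : Matrix (Fin a) (Fin b) ℝ) : ℝ := ⨆ j, ∑ i, |B i j|

/-! ### Componentwise relative distance -/

/-- Componentwise relative distance between vectors, with the conventions
`t/0 = ∞` for `t ≠ 0` and `0/0 = 0`. -/
def rhoV {d : ℕ} (xh x : Fin d → ℝ) : ℝ≥0∞ :=
  ⨆ i, (if x i = 0 then (if xh i = 0 then (0 : ℝ≥0∞) else ⊤)
        else ENNReal.ofReal (|xh i - x i| / |x i|))

/-- Componentwise relative distance between matrices given by their columns. -/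
def rhoM {d n : ℕ} (Xh X : Fin n → Fin d → ℝ) : ℝ≥0∞ := ⨆ t, rhoV (Xh t) (X t)

/-! ### Exact transformer components -/

/-- RMS layer normalization `R(x) = √d · x / ‖x‖₂`. -/
def rmsN {d : ℕ} (x : Fin d → ℝ) : Fin d → ℝ := fun i => Real.sqrt d * x i / l2 x

/-- sample mean. -/
def meanv {d : ℕ} (x : Fin d → ℝ) : ℝ := (∑ i, x i) / d

/-- centring `c̊(x) = x − μ(x) e`. -/
def centr {d : ℕ} (x : Fin d → ℝ) : Fin d → ℝ := fun i => x i - meanv x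

/-- layer normalization `N(x) = √d · c̊(x)/‖c̊(x)‖₂ = (x − μ(x)e)/√ν(x)`. -/
def layerN {d : ℕ} (x : Fin d → ℝ) : Fin d → ℝ := rmsN (centr x)

/-- softmax. -/
def softmax {m : ℕ} (s : Fin m → ℝ) : Fin m → ℝ :=
  fun i => Real.exp (s i) / ∑ j, Real.exp (s j)

/-- affine map `x ↦ A x + b`. -/
def affine {k m : ℕ} (A : Matrix (Fin k) (Fin m) ℝ) (b : Fin k → ℝ) (x : Fin m → ℝ) :
    Fin k → ℝ :=
  fun i => (∑ j, A i j * x j) + b i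

/-- two-layer perceptron `M = L₂ ∘ ReLU ∘ L₁`. -/
def tlp {d D : ℕ} (A1 : Matrix (Fin D) (Fin d) ℝ) (b1 : Fin D → ℝ)
    (A2 : Matrix (Fin d) (Fin D) ℝ) (b2 : Fin d → ℝ) (x : Fin d → ℝ) : Fin d → ℝ :=
  affine A2 b2 (fun i => max 0 (affine A1 b1 x i))

/-- the matrix of the first `t+1` columns of `X` (columns are `X 0, …, X t`). -/
def prefixCols {d n : ℕ} (X : Fin n → Fin d → ℝ) (t : Fin n) : Fin (t.1 + 1) → Fin d → ℝ :=
  fun i => X (Fin.castLE t.isLt i)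

/-- similarity scores `S(Z) = (1/√d) (W_k Z)ᵀ (W_q z_last)`. -/
def simScores {d m : ℕ} (Wq Wk : Matrix (Fin d) (Fin d) ℝ)
    (Z : Fin (m + 1) → Fin d → ℝ) : Fin (m + 1) → ℝ :=
  fun i => (1 / Real.sqrt d) * ∑ a, (∑ b, Wk a b * Z i b) * (∑ b, Wq a b * Z (Fin.last m) b)

/-- masked single-head self-attention: the `t`-th column of `A(X)` is
`W_v X_t ψ(S(X_t))`. -/
def attn {d n : ℕ} (Wq Wk Wv : Matrix (Fin d) (Fin d) ℝ) (X : Fin n → Fin d → ℝ) :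
    Fin n → Fin d → ℝ :=
  fun t i => ∑ a, Wv i a * ∑ j : Fin (t.1 + 1),
    softmax (simScores Wq Wk (prefixCols X t)) j * prefixCols X t j a

/-- transformer configuration. -/
structure Config (d D : ℕ) where
  A1 : Matrix (Fin D) (Fin d) ℝ
  b1 : Fin D → ℝ
  A2 : Matrix (Fin d) (Fin D) ℝ
  b2 : Fin d → ℝ
  Wq : Matrix (Fin d) (Fin d) ℝ
  Wk : Matrix (Fin d) (Fin d) ℝ
  Wv : Matrix (Fin d) (Fin d) ℝ

/-- transformer block with RMS layer normalization
`Q_Θ = (Id + M* ∘ R*) ∘ (Id + A ∘ R*)`. -/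
def Qblock {d D n : ℕ} (c : Config d D) (X : Fin n → Fin d → ℝ) : Fin n → Fin d → ℝ :=
  let Y : Fin n → Fin d → ℝ :=
    fun t i => X t i + attn c.Wq c.Wk c.Wv (fun s => rmsN (X s)) t i
  fun t i => Y t i + tlp c.A1 c.b1 c.A2 c.b2 (rmsN (Y t)) i

/-- transformer block with layer normalization
`T_Θ = (Id + M* ∘ N*) ∘ (Id + A ∘ N*)`. -/
def Tblock {d D n : ℕ} (c : Config d D) (X : Fin n → Fin d → ℝ) : Fin n → Fin d → ℝ :=
  let Y : Fin n → Fin d → ℝ :=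
    fun t i => X t i + attn c.Wq c.Wk c.Wv (fun s => layerN (X s)) t i
  fun t i => Y t i + tlp c.A1 c.b1 c.A2 c.b2 (layerN (Y t)) i

/-! ### Floating-point model -/

/-- `a` is the rounded value of `b`: `a = b (1+δ)`, `|δ| ≤ u`. -/
def Fp (u a b : ℝ) : Prop := ∃ δ : ℝ, |δ| ≤ u ∧ a = b * (1 + δ)

/-- recursive summation of a list in floating-point arithmetic. -/
inductive FlSumL (u : ℝ) : List ℝ → ℝ → Prop
  | nil : FlSumL u [] 0
  | single (x : ℝ) : FlSumL u [x] x
  | cons (x y : ℝ) (l : List ℝ) (s r : ℝ) :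
      FlSumL u (y :: l) s → Fp u r (x + s) → FlSumL u (x :: y :: l) r

/-- recursive summation of the values of a finite family. -/
def FlSum (u : ℝ) {m : ℕ} (f : Fin m → ℝ) (r : ℝ) : Prop := FlSumL u (List.ofFn f) r

/-- floating-point inner product: rounded products, recursive summation. -/
def FlDot (u : ℝ) {m : ℕ} (x y : Fin m → ℝ) (r : ℝ) : Prop :=
  ∃ p : Fin m → ℝ, (∀ i, Fp u (p i) (x i * y i)) ∧ FlSum u p r

/-- floating-point matrix-vector product. -/
def FlMulVec (u : ℝ) {k m : ℕ} (A : Matrix (Fin k) (Fin m) ℝ) (x : Fin m → ℝ)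
    (r : Fin k → ℝ) : Prop :=
  ∀ i, FlDot u (A i) x (r i)

/-- floating-point evaluation of `x ↦ Ax + b`. -/
def FlAffine (u : ℝ) {k m : ℕ} (A : Matrix (Fin k) (Fin m) ℝ) (b : Fin k → ℝ)
    (x : Fin m → ℝ) (r : Fin k → ℝ) : Prop :=
  ∃ w : Fin k → ℝ, FlMulVec u A x w ∧ ∀ i, Fp u (r i) (w i + b i)

/-- floating-point evaluation of the two-layer perceptron (ReLU is exact). -/
def FlTLP (u : ℝ) {d D : ℕ} (A1 : Matrix (Fin D) (Fin d) ℝ) (b1 : Fin D → ℝ)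
    (A2 : Matrix (Fin d) (Fin D) ℝ) (b2 : Fin d → ℝ) (x : Fin d → ℝ) (r : Fin d → ℝ) : Prop :=
  ∃ w : Fin D → ℝ, FlAffine u A1 b1 x w ∧ FlAffine u A2 b2 (fun i => max 0 (w i)) r

/-- floating-point evaluation of the Euclidean norm: squares, recursive
summation, square root. -/
def FlL2 (u : ℝ) {m : ℕ} (x : Fin m → ℝ) (r : ℝ) : Prop :=
  ∃ sq : Fin m → ℝ, (∀ i, Fp u (sq i) (x i * x i)) ∧
    ∃ s : ℝ, FlSum u sq s ∧ Fp u r (Real.sqrt s)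

/-- floating-point evaluation of the RMS layer normalization. -/
def FlRMS (u : ℝ) {d : ℕ} (x : Fin d → ℝ) (r : Fin d → ℝ) : Prop :=
  ∃ nrm : ℝ, FlL2 u x nrm ∧
    ∀ i, ∃ t : ℝ, Fp u t (Real.sqrt d * x i) ∧ Fp u (r i) (t / nrm)

/-- floating-point evaluation of the centring. -/
def FlCentr (u : ℝ) {d : ℕ} (x : Fin d → ℝ) (r : Fin d → ℝ) : Prop :=
  ∃ s m : ℝ, FlSum u x s ∧ Fp u m (s / (d : ℝ)) ∧ ∀ i, Fp u (r i) (x i - m)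

/-- floating-point evaluation of the layer normalization: centring followed by
RMS normalization of the centred vector. -/
def FlLN (u : ℝ) {d : ℕ} (x : Fin d → ℝ) (r : Fin d → ℝ) : Prop :=
  ∃ c : Fin d → ℝ, FlCentr u x c ∧ FlRMS u c r

/-- floating-point evaluation of the softmax. -/
def FlSoftmax (u : ℝ) {m : ℕ} (s : Fin m → ℝ) (r : Fin m → ℝ) : Prop :=
  ∃ ex : Fin m → ℝ, (∀ i, Fp u (ex i) (Real.exp (s i))) ∧
    ∃ tot : ℝ, FlSum u ex tot ∧ ∀ i, Fp u (r i) (ex i / tot)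

/-- floating-point evaluation of the similarity scores. -/
def FlSim (u : ℝ) {d m : ℕ} (Wq Wk : Matrix (Fin d) (Fin d) ℝ)
    (Z : Fin (m + 1) → Fin d → ℝ) (r : Fin (m + 1) → ℝ) : Prop :=
  ∃ q : Fin d → ℝ, FlMulVec u Wq (Z (Fin.last m)) q ∧
    ∀ i, ∃ kv : Fin d → ℝ, ∃ dp : ℝ, FlMulVec u Wk (Z i) kv ∧ FlDot u q kv dp ∧
      Fp u (r i) (dp / Real.sqrt d)

/-- floating-point evaluation of the self-attention. -/
def FlAttn (u : ℝ) {d n : ℕ} (Wq Wk Wv : Matrix (Fin d) (Fin d) ℝ)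
    (X : Fin n → Fin d → ℝ) (r : Fin n → Fin d → ℝ) : Prop :=
  ∀ t : Fin n, ∃ s psi : Fin (t.1 + 1) → ℝ, ∃ z : Fin d → ℝ,
    FlSim u Wq Wk (prefixCols X t) s ∧ FlSoftmax u s psi ∧
    (∀ a : Fin d, FlDot u (fun j => prefixCols X t j a) psi (z a)) ∧
    FlMulVec u Wv z (r t)

/-- floating-point evaluation of `X ↦ X + A(R*(X))`. -/
def FlResAttnRMS (u : ℝ) {d n : ℕ} (Wq Wk Wv : Matrix (Fin d) (Fin d) ℝ)
    (X r : Fin n → Fin d → ℝ) : Prop :=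
  ∃ RX G : Fin n → Fin d → ℝ, (∀ t, FlRMS u (X t) (RX t)) ∧ FlAttn u Wq Wk Wv RX G ∧
    ∀ t i, Fp u (r t i) (X t i + G t i)

/-- floating-point evaluation of `X ↦ X + A(N*(X))`. -/
def FlResAttnLN (u : ℝ) {d n : ℕ} (Wq Wk Wv : Matrix (Fin d) (Fin d) ℝ)
    (X r : Fin n → Fin d → ℝ) : Prop :=
  ∃ NX G : Fin n → Fin d → ℝ, (∀ t, FlLN u (X t) (NX t)) ∧ FlAttn u Wq Wk Wv NX G ∧
    ∀ t i, Fp u (r t i) (X t i + G t i)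

/-- floating-point evaluation of `x ↦ x + M(R(x))`. -/
def FlResTlpRMS (u : ℝ) {d D : ℕ} (A1 : Matrix (Fin D) (Fin d) ℝ) (b1 : Fin D → ℝ)
    (A2 : Matrix (Fin d) (Fin D) ℝ) (b2 : Fin d → ℝ) (x r : Fin d → ℝ) : Prop :=
  ∃ rx m : Fin d → ℝ, FlRMS u x rx ∧ FlTLP u A1 b1 A2 b2 rx m ∧
    ∀ i, Fp u (r i) (x i + m i)

/-- floating-point evaluation of `x ↦ x + M(N(x))`. -/
def FlResTlpLN (u : ℝ) {d D : ℕ} (A1 : Matrix (Fin D) (Fin d) ℝ) (b1 : Fin D → ℝ)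
    (A2 : Matrix (Fin d) (Fin D) ℝ) (b2 : Fin d → ℝ) (x r : Fin d → ℝ) : Prop :=
  ∃ nx m : Fin d → ℝ, FlLN u x nx ∧ FlTLP u A1 b1 A2 b2 nx m ∧
    ∀ i, Fp u (r i) (x i + m i)

/-- floating-point evaluation of the transformer block with RMS normalization. -/
def FlQBlock (u : ℝ) {d D n : ℕ} (c : Config d D) (X R : Fin n → Fin d → ℝ) : Prop :=
  ∃ RX G Y RY M : Fin n → Fin d → ℝ,
    (∀ t, FlRMS u (X t) (RX t)) ∧
    FlAttn u c.Wq c.Wk c.Wv RX G ∧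
    (∀ t i, Fp u (Y t i) (X t i + G t i)) ∧
    (∀ t, FlRMS u (Y t) (RY t)) ∧
    (∀ t, FlTLP u c.A1 c.b1 c.A2 c.b2 (RY t) (M t)) ∧
    (∀ t i, Fp u (R t i) (Y t i + M t i))

/-- floating-point evaluation of the transformer block with layer
normalization. -/
def FlTBlock (u : ℝ) {d D n : ℕ} (c : Config d D) (X R : Fin n → Fin d → ℝ) : Prop :=
  ∃ NX G Y NY M : Fin n → Fin d → ℝ,
    (∀ t, FlLN u (X t) (NX t)) ∧
    FlAttn u c.Wq c.Wk c.Wv NX G ∧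
    (∀ t i, Fp u (Y t i) (X t i + G t i)) ∧
    (∀ t, FlLN u (Y t) (NY t)) ∧
    (∀ t, FlTLP u c.A1 c.b1 c.A2 c.b2 (NY t) (M t)) ∧
    (∀ t i, Fp u (R t i) (Y t i + M t i))

/-- floating-point evaluation of a deep transformer with RMS normalization. -/
def FlQDeep (u : ℝ) {d D n L : ℕ} (cfg : Fin L → Config d D)
    (X R : Fin n → Fin d → ℝ) : Prop :=
  ∃ Z : Fin (L + 1) → Fin n → Fin d → ℝ, Z 0 = X ∧ Z (Fin.last L) = R ∧
    ∀ l : Fin L, FlQBlock u (cfg l) (Z l.castSucc) (Z l.succ)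

/-- floating-point evaluation of a deep transformer with layer normalization. -/
def FlTDeep (u : ℝ) {d D n L : ℕ} (cfg : Fin L → Config d D)
    (X R : Fin n → Fin d → ℝ) : Prop :=
  ∃ Z : Fin (L + 1) → Fin n → Fin d → ℝ, Z 0 = X ∧ Z (Fin.last L) = R ∧
    ∀ l : Fin L, FlTBlock u (cfg l) (Z l.castSucc) (Z l.succ)

/-! ### Condition numbers and amplification factors -/

/-- componentwise condition number of a vector-valued map. -/
def kccV {d k : ℕ} (f : (Fin d → ℝ) → (Fin k → ℝ)) (x : Fin d → ℝ) : ℝ :=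
  ⨆ i, (∑ j, |fderiv ℝ f x (Pi.single j 1) i * x j|) / |f x i|

/-- componentwise condition number of a matrix-valued map (matrices given by
their columns). -/
def kccM {d n : ℕ} (f : (Fin n → Fin d → ℝ) → (Fin n → Fin d → ℝ))
    (X : Fin n → Fin d → ℝ) : ℝ :=
  ⨆ p : Fin n × Fin d, (∑ q : Fin n × Fin d,
      |fderiv ℝ f X (Pi.single q.1 (Pi.single q.2 1)) p.1 p.2 * X q.1 q.2|) / |f X p.1 p.2|

/-- cancellation factor of a residual connection, vector version. -/
def xiResV {d : ℕ} (x g : Fin d → ℝ) : ℝ := ⨆ i, (|x i| + |g i|) / |x i + g i|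

/-- cancellation factor of a residual connection, matrix version. -/
def xiRes {d n : ℕ} (X G : Fin n → Fin d → ℝ) : ℝ :=
  ⨆ p : Fin n × Fin d, (|X p.1 p.2| + |G p.1 p.2|) / |X p.1 p.2 + G p.1 p.2|

/-- positive support `Ω = supp₊(L₁(z))`. -/
def posSupp {d D : ℕ} (A1 : Matrix (Fin D) (Fin d) ℝ) (b1 : Fin D → ℝ)
    (z : Fin d → ℝ) : Finset (Fin D) :=
  Finset.univ.filter fun k => 0 < affine A1 b1 z k

/-- amplification factor ξ(M, z) of the two-layer perceptron. -/
def xiM {d D : ℕ} (A1 : Matrix (Fin D) (Fin d) ℝ) (b1 : Fin D → ℝ)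
    (A2 : Matrix (Fin d) (Fin D) ℝ) (b2 : Fin d → ℝ) (z : Fin d → ℝ) : ℝ :=
  ⨆ i : Fin d, ((∑ k ∈ posSupp A1 b1 z, |A2 i k| * ((∑ j, |A1 k j| * |z j|) + |b1 k|)) + |b2 i|) /
    |tlp A1 b1 A2 b2 z i|

/-- amplification factor ξ(S, Z) of the similarity scores. -/
def xiSim {d m : ℕ} (Wq Wk : Matrix (Fin d) (Fin d) ℝ)
    (Z : Fin (m + 1) → Fin d → ℝ) : ℝ :=
  ⨆ i, ((1 / Real.sqrt d) *
      ∑ a, (∑ b, |Wk a b| * |Z i b|) * (∑ b, |Wq a b| * |Z (Fin.last m) b|)) /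
    |simScores Wq Wk Z i|

/-- amplification factor ξ(A, Z) of the self-attention. -/
def xiAttn {d n : ℕ} (Wq Wk Wv : Matrix (Fin d) (Fin d) ℝ) (Z : Fin n → Fin d → ℝ) : ℝ :=
  ⨆ p : Fin d × Fin n,
    (∑ j : Fin (p.2.1 + 1), (∑ a, |Wv p.1 a| * |prefixCols Z p.2 j a|) *
        softmax (simScores Wq Wk (prefixCols Z p.2)) j) /
    |∑ j : Fin (p.2.1 + 1), (∑ a, Wv p.1 a * prefixCols Z p.2 j a) *
        softmax (simScores Wq Wk (prefixCols Z p.2)) j|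



/-! ### Helper material -/

def EF (c f : ℝ) : Prop := Real.exp (-c) ≤ f ∧ f ≤ Real.exp c

theorem EF.pos {c f : ℝ} (h : EF c f) : 0 < f := lt_of_lt_of_le (Real.exp_pos _) h.1

theorem EF.mul {c e f g : ℝ} (h : EF c f) (k : EF e g) : EF (c + e) (f * g) := by
  constructor
  · rw [neg_add, Real.exp_add]
    exact mul_le_mul h.1 k.1 (Real.exp_pos _).le h.pos.le
  · rw [Real.exp_add]
    exact mul_le_mul h.2 k.2 k.pos.le (Real.exp_pos _).le

theorem EF.inv {c f : ℝ} (h : EF c f) : EF c f⁻¹ := by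
  constructor
  · rw [Real.exp_neg]
    exact inv_anti₀ h.pos h.2
  · have := inv_anti₀ (Real.exp_pos _) h.1
    rwa [Real.exp_neg, inv_inv] at this

theorem EF.mono {c e f : ℝ} (h : EF c f) (hce : c ≤ e) : EF e f :=
  ⟨(Real.exp_le_exp.2 (by linarith)).trans h.1, h.2.trans (Real.exp_le_exp.2 hce)⟩

theorem EF.one {c : ℝ} (h : 0 ≤ c) : EF c 1 :=
  ⟨Real.exp_le_one_iff.2 (by linarith), Real.one_le_exp h⟩

theorem EF.of_abs {p g : ℝ} (hp : p ≤ 1 / 2) (h : |g - 1| ≤ p) : EF (p + 2 * p ^ 2) g := by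
  have h0 : 0 ≤ p := (abs_nonneg _).trans h
  rw [abs_le] at h
  constructor
  · have h1 : 1 + (p + 2 * p ^ 2) ≤ Real.exp (p + 2 * p ^ 2) := by
      linarith [Real.add_one_le_exp (p + 2 * p ^ 2)]
    have h2 : 1 ≤ (1 - p) * Real.exp (p + 2 * p ^ 2) := by
      have : (1 - p) * (1 + (p + 2 * p ^ 2)) ≤ (1 - p) * Real.exp (p + 2 * p ^ 2) :=
        mul_le_mul_of_nonneg_left h1 (by linarith)
      nlinarith [mul_nonneg (sq_nonneg p) (by linarith : (0 : ℝ) ≤ 1 - 2 * p)]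
    have h3 : Real.exp (-(p + 2 * p ^ 2)) ≤ 1 - p := by
      rw [Real.exp_neg, inv_le_iff_one_le_mul₀ (Real.exp_pos _)]
      exact h2
    linarith
  · have := Real.add_one_le_exp p
    have h4 : Real.exp p ≤ Real.exp (p + 2 * p ^ 2) := Real.exp_le_exp.2 (by nlinarith)
    linarith

theorem EF.abs_sub {c f : ℝ} (h : EF c f) : |f - 1| ≤ Real.exp c - 1 := by
  have h1 := h.1
  have h2 := h.2
  have h3 : Real.exp c * Real.exp (-c) = 1 := by rw [← Real.exp_add]; simp
  have h4 := Real.exp_pos c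
  have h5 := Real.exp_pos (-c)
  rw [abs_le]
  constructor
  · nlinarith [sq_nonneg (Real.exp c - Real.exp (-c)), sq_nonneg (Real.exp c + Real.exp (-c) - 2)]
  · linarith

theorem EF.sum {m : ℕ} {c : ℝ} {p f : Fin (m + 1) → ℝ} (hp : ∀ i, 0 < p i)
    (hf : ∀ i, EF c (f i)) : EF c ((∑ i, p i * f i) / ∑ i, p i) := by
  have hs : 0 < ∑ i, p i := Finset.sum_pos (fun i _ => hp i) Finset.univ_nonempty
  constructor
  · rw [le_div_iff₀ hs, Finset.mul_sum]
    exact Finset.sum_le_sum fun i _ => by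
      rw [mul_comm]; exact mul_le_mul_of_nonneg_left (hf i).1 (hp i).le
  · rw [div_le_iff₀ hs, Finset.mul_sum]
    exact Finset.sum_le_sum fun i _ => by
      rw [mul_comm (Real.exp c)]; exact mul_le_mul_of_nonneg_left (hf i).2 (hp i).le

def vv (u : ℝ) : ℝ := u + 2 * u ^ 2

theorem vv_nonneg {u : ℝ} (h : 0 ≤ u) : 0 ≤ vv u := by unfold vv; positivity

theorem Fp.ef {u a b : ℝ} (hu : u ≤ 1 / 2) (h : Fp u a b) : ∃ f, EF (vv u) f ∧ a = b * f := by
  obtain ⟨δ, h1, h2⟩ := h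
  exact ⟨1 + δ, EF.of_abs hu (by simpa using h1), h2⟩

theorem flsum_ef {u : ℝ} (hu0 : 0 ≤ u) (hu : u ≤ 1 / 2) :
    ∀ (m : ℕ) (p : Fin (m + 1) → ℝ) (r : ℝ), FlSumL u (List.ofFn p) r →
      ∃ f : Fin (m + 1) → ℝ, (∀ i, EF (m * vv u) (f i)) ∧ r = ∑ i, p i * f i := by
  intro m
  induction m with
  | zero =>
    intro p r h
    rw [List.ofFn_succ, List.ofFn_zero] at h
    cases h
    exact ⟨fun _ => 1, fun i => EF.one (by simp), by simp⟩
  | succ m ih =>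
    intro p r h
    have hs : List.ofFn p = p 0 :: List.ofFn (fun i : Fin (m + 1) => p i.succ) := List.ofFn_succ
    have hs2 : List.ofFn (fun i : Fin (m + 1) => p i.succ)
      = p 1 :: List.ofFn (fun i : Fin m => p i.succ.succ) := by
      rw [List.ofFn_succ]; rfl
    rw [hs, hs2] at h
    cases h with
    | cons _ _ _ s _ h1 h2 =>
    rw [← hs2] at h1
    obtain ⟨f, hf, hsum⟩ := ih _ _ h1
    obtain ⟨g, hg, hr⟩ := h2.ef hu
    have hv := vv_nonneg hu0
    refine ⟨Fin.cons g (fun i => f i * g), ?_, ?_⟩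
    · intro i
      refine Fin.cases ?_ (fun i => ?_) i
      · simp only [Fin.cons_zero]
        refine hg.mono ?_
        push_cast
        nlinarith [mul_nonneg (Nat.cast_nonneg (α := ℝ) m) hv]
      · simp only [Fin.cons_succ]
        refine ((hf i).mul hg).mono ?_
        push_cast
        linarith
    · rw [Fin.sum_univ_succ, hr, hsum, add_mul, Finset.sum_mul]
      simp only [Fin.cons_zero, Fin.cons_succ]
      congr 1
      exact Finset.sum_congr rfl fun i _ => by ring

theorem fldot_ef {u : ℝ} (hu0 : 0 ≤ u) (hu : u ≤ 1 / 2) {m : ℕ} {x y : Fin m → ℝ} {r : ℝ}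
    (h : FlDot u x y r) :
      ∃ f : Fin m → ℝ, (∀ i, EF (m * vv u) (f i)) ∧ r = ∑ i, x i * y i * f i := by
  obtain ⟨p, hp, hs⟩ := h
  cases m with
  | zero =>
    unfold FlSum at hs
    rw [List.ofFn_zero] at hs
    cases hs
    exact ⟨fun _ => 1, fun i => i.elim0, by simp⟩
  | succ m =>
    obtain ⟨f, hf, hr⟩ := flsum_ef hu0 hu m p r hs
    choose g hg hpg using fun i => (hp i).ef hu
    refine ⟨fun i => g i * f i, fun i => ((hg i).mul (hf i)).mono ?_, ?_⟩
    · push_cast; linarith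
    · rw [hr]
      exact Finset.sum_congr rfl fun i _ => by rw [hpg i]; ring

def Near (c y x X : ℝ) : Prop := |x| ≤ X ∧ |y - x| ≤ (Real.exp c - 1) * X

theorem Near.nonneg {c y x X : ℝ} (h : Near c y x X) : 0 ≤ X := (abs_nonneg _).trans h.1

theorem Near.mul {c e y x X z w W : ℝ} (h : Near c y x X) (k : Near e z w W) :
    Near (c + e) (y * z) (x * w) (X * W) := by
  refine ⟨by rw [abs_mul]; exact mul_le_mul h.1 k.1 (abs_nonneg _) h.nonneg, ?_⟩
  have h1 : |z| ≤ Real.exp e * W := by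
    calc |z| = |(z - w) + w| := by ring_nf
      _ ≤ |z - w| + |w| := abs_add_le _ _
      _ ≤ _ := by linarith [k.1, k.2]
  calc |y * z - x * w| = |(y - x) * z + x * (z - w)| := by ring_nf
    _ ≤ |y - x| * |z| + |x| * |z - w| := by
      rw [← abs_mul, ← abs_mul]; exact abs_add_le _ _
    _ ≤ ((Real.exp c - 1) * X) * (Real.exp e * W) + X * ((Real.exp e - 1) * W) := by
      refine add_le_add (mul_le_mul h.2 h1 (abs_nonneg _) ((abs_nonneg _).trans h.2))
        (mul_le_mul h.1 k.2 (abs_nonneg _) h.nonneg)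
    _ = _ := by rw [Real.exp_add]; ring

theorem Near.sum {m : ℕ} {c : ℝ} {y x X : Fin m → ℝ} (h : ∀ i, Near c (y i) (x i) (X i)) :
    Near c (∑ i, y i) (∑ i, x i) (∑ i, X i) := by
  refine ⟨(Finset.abs_sum_le_sum_abs _ _).trans (Finset.sum_le_sum fun i _ => (h i).1), ?_⟩
  rw [← Finset.sum_sub_distrib, Finset.mul_sum]
  exact (Finset.abs_sum_le_sum_abs _ _).trans (Finset.sum_le_sum fun i _ => (h i).2)

theorem EF.near {c f : ℝ} (h : EF c f) : Near c f 1 1 := ⟨by simp, by simpa using h.abs_sub⟩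

theorem Near.ef {c e y x X f : ℝ} (h : Near c y x X) (k : EF e f) :
    Near (c + e) (y * f) x X := by
  simpa using h.mul k.near

theorem Near.self (x : ℝ) : Near 0 x x |x| := ⟨le_rfl, by simp⟩

theorem EF.near_mul {c f : ℝ} (h : EF c f) (x : ℝ) : Near c (x * f) x |x| := by
  simpa using (Near.self x).ef h

theorem Near.dot {u : ℝ} (hu0 : 0 ≤ u) (hu : u ≤ 1 / 2) {m : ℕ} {x y xh yh X Y : Fin m → ℝ}
    {r c e : ℝ} (h : FlDot u xh yh r) (hx : ∀ i, Near c (xh i) (x i) (X i))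
    (hy : ∀ i, Near e (yh i) (y i) (Y i)) :
    Near (c + e + m * vv u) r (∑ i, x i * y i) (∑ i, X i * Y i) := by
  obtain ⟨f, hf, rfl⟩ := fldot_ef hu0 hu h
  exact Near.sum fun i => ((hx i).mul (hy i)).ef (hf i)

theorem sim_near {u w : ℝ} (hu0 : 0 ≤ u) (hu : u ≤ 1 / 2) {d m : ℕ}
    {Wq Wk : Matrix (Fin d) (Fin d) ℝ} {Zh Z : Fin (m + 1) → Fin d → ℝ}
    (hZ : ∀ i a, Near w (Zh i a) (Z i a) |Z i a|) {r : Fin (m + 1) → ℝ}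
    (h : FlSim u Wq Wk Zh r) (i : Fin (m + 1)) :
    |r i - simScores Wq Wk Z i| ≤ (Real.exp ((3 * d + 1) * vv u + 2 * w) - 1) *
      ((1 / Real.sqrt d) *
        ∑ a, (∑ b, |Wq a b| * |Z (Fin.last m) b|) * (∑ b, |Wk a b| * |Z i b|)) := by
  obtain ⟨q, hq, h⟩ := h
  obtain ⟨kv, dp, hk, hdp, hr⟩ := h i
  have h1 : ∀ a, Near (0 + w + d * vv u) (q a) (∑ b, Wq a b * Z (Fin.last m) b)
      (∑ b, |Wq a b| * |Z (Fin.last m) b|) := fun a =>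
    Near.dot hu0 hu (hq a) (fun b => Near.self _) (fun b => hZ _ b)
  have h2 : ∀ a, Near (0 + w + d * vv u) (kv a) (∑ b, Wk a b * Z i b)
      (∑ b, |Wk a b| * |Z i b|) := fun a =>
    Near.dot hu0 hu (hk a) (fun b => Near.self _) (fun b => hZ _ b)
  have h3 := Near.dot hu0 hu hdp h1 h2
  obtain ⟨f, hf, hrf⟩ := hr.ef hu
  have h4 := (((Near.self (1 / Real.sqrt d)).mul h3).ef hf).2
  rw [abs_of_nonneg (by positivity : 0 ≤ 1 / Real.sqrt d)] at h4
  have e1 : (0 + ((0 + w + d * vv u) + (0 + w + d * vv u) + d * vv u) + vv u)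
    = (3 * d + 1) * vv u + 2 * w := by ring
  rw [e1] at h4
  have e2 : 1 / Real.sqrt d * dp * f = r i := by rw [hrf]; ring
  rw [e2] at h4
  have e3 : simScores Wq Wk Z i = 1 / Real.sqrt d *
      ∑ a, (∑ b, Wq a b * Z (Fin.last m) b) * (∑ b, Wk a b * Z i b) := by
    unfold simScores
    congr 1
    exact Finset.sum_congr rfl fun a _ => mul_comm _ _
  rw [e3]
  exact h4

theorem softmax_ef {u D : ℝ} (hu0 : 0 ≤ u) (hu : u ≤ 1 / 2) {m : ℕ}
    {sh s psi : Fin (m + 1) → ℝ} (hs : ∀ i, |sh i - s i| ≤ D) (h : FlSoftmax u sh psi)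
    (i : Fin (m + 1)) :
    Near (2 * D + (m + 3) * vv u) (psi i) (softmax s i) (softmax s i) := by
  obtain ⟨ex, hex, tot, htot, hr⟩ := h
  have h1 : ∀ i, ∃ f, EF (D + vv u) f ∧ ex i = Real.exp (s i) * f := by
    intro i
    obtain ⟨f, hf, he⟩ := (hex i).ef hu
    refine ⟨Real.exp (sh i - s i) * f, EF.mul ⟨?_, ?_⟩ hf, ?_⟩
    · exact Real.exp_le_exp.2 (abs_le.1 (hs i)).1
    · exact Real.exp_le_exp.2 (abs_le.1 (hs i)).2
    · rw [he, ← mul_assoc, ← Real.exp_add]; ring_nf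
  choose f hf hexf using h1
  obtain ⟨g, hg, ht⟩ := flsum_ef hu0 hu m ex tot htot
  have hp : ∀ i, 0 < Real.exp (s i) := fun i => Real.exp_pos _
  have hsum : 0 < ∑ i, Real.exp (s i) :=
    Finset.sum_pos (fun i _ => hp i) Finset.univ_nonempty
  have h2 := EF.sum hp (fun i => (hf i).mul (hg i))
  have h3 : tot = ∑ i, Real.exp (s i) * (f i * g i) := by
    rw [ht]; exact Finset.sum_congr rfl fun i _ => by rw [hexf]; ring
  rw [← h3] at h2
  obtain ⟨k, hk, hrk⟩ := (hr i).ef hu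
  have h4 := ((hf i).mul h2.inv).mul hk
  have h5 := h4.near_mul (softmax s i)
  have h6 : 0 ≤ softmax s i := div_nonneg (hp i).le hsum.le
  rw [abs_of_nonneg h6] at h5
  have e1 : D + vv u + (D + vv u + m * vv u) + vv u = 2 * D + (m + 3) * vv u := by ring
  rw [e1] at h5
  have e2 : softmax s i * (f i * (tot / ∑ i, Real.exp (s i))⁻¹ * k) = psi i := by
    rw [hrk, hexf]
    unfold softmax
    rw [inv_div]
    field_simp
  rwa [e2] at h5

/-! ### Singular values -/

theorem l2_nonneg {d : ℕ} (x : Fin d → ℝ) : 0 ≤ l2 x := Real.sqrt_nonneg _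

theorem l2_sq {d : ℕ} (x : Fin d → ℝ) : l2 x ^ 2 = ∑ i, x i ^ 2 :=
  Real.sq_sqrt (Finset.sum_nonneg fun i _ => sq_nonneg _)

theorem l2_abs {d : ℕ} (x : Fin d → ℝ) : l2 (fun i => |x i|) = l2 x := by
  unfold l2; simp

theorem l2_smul {d : ℕ} (c : ℝ) (hc : 0 ≤ c) (x : Fin d → ℝ) :
    l2 (fun i => c * x i) = c * l2 x := by
  unfold l2
  simp_rw [mul_pow]
  rw [← Finset.mul_sum, Real.sqrt_mul (sq_nonneg c), Real.sqrt_sq hc]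

theorem l2_mulVec_le {d : ℕ} (B : Matrix (Fin d) (Fin d) ℝ) (x : Fin d → ℝ) :
    l2 (fun i => ∑ j, B i j * x j) ≤ Real.sqrt (∑ i, ∑ j, B i j ^ 2) * l2 x := by
  unfold l2
  rw [← Real.sqrt_mul (by positivity), Finset.sum_mul]
  exact Real.sqrt_le_sqrt (Finset.sum_le_sum fun i _ => Finset.sum_mul_sq_le_sq_mul_sq _ _ _)

theorem sigmaMax_bdd {d : ℕ} (B : Matrix (Fin d) (Fin d) ℝ) :
    BddAbove (Set.range fun x : {x : Fin d → ℝ // l2 x = 1} =>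
      l2 (fun i => ∑ j, B i j * x.1 j)) := by
  refine ⟨Real.sqrt (∑ i, ∑ j, B i j ^ 2), ?_⟩
  rintro _ ⟨x, rfl⟩
  have := l2_mulVec_le B x.1
  rwa [x.2, mul_one] at this

theorem sigmaMax_nonneg {d : ℕ} (B : Matrix (Fin d) (Fin d) ℝ) : 0 ≤ sigmaMax B :=
  Real.iSup_nonneg fun _ => l2_nonneg _

theorem l2_le_sigmaMax {d : ℕ} (B : Matrix (Fin d) (Fin d) ℝ) (x : Fin d → ℝ) :
    l2 (fun i => ∑ j, B i j * x j) ≤ sigmaMax B * l2 x := by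
  rcases (l2_nonneg x).eq_or_lt with h | h
  · have := l2_mulVec_le B x
    rw [← h, mul_zero] at this ⊢
    exact this
  · have h1 : l2 (fun i => (l2 x)⁻¹ * x i) = 1 := by
      rw [l2_smul _ (inv_nonneg.2 h.le), inv_mul_cancel₀ h.ne']
    have h2 := le_ciSup (sigmaMax_bdd B) ⟨_, h1⟩
    have h3 : l2 (fun i => ∑ j, B i j * ((l2 x)⁻¹ * x j))
        = (l2 x)⁻¹ * l2 (fun i => ∑ j, B i j * x j) := by
      rw [← l2_smul _ (inv_nonneg.2 h.le)]
      congr 1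
      ext i
      rw [Finset.mul_sum]
      exact Finset.sum_congr rfl fun j _ => by ring
    change l2 (fun i => ∑ j, B i j * ((l2 x)⁻¹ * x j)) ≤ sigmaMax B at h2
    rw [h3, inv_mul_le_iff₀ h] at h2
    linarith

theorem one_le_cond {d : ℕ} (hd : 2 ≤ d) (B : Matrix (Fin d) (Fin d) ℝ) (hB : B.det ≠ 0) :
    1 ≤ sigmaMax B / sigmaMin B := by
  have hx : l2 (Pi.single (⟨0, by omega⟩ : Fin d) (1 : ℝ)) = 1 := by
    unfold l2
    rw [Finset.sum_eq_single (⟨0, by omega⟩ : Fin d)]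
    · simp
    · intro b _ hb; simp [Pi.single_eq_of_ne hb]
    · simp
  haveI : Nonempty {x : Fin d → ℝ // l2 x = 1} := ⟨⟨_, hx⟩⟩
  have hlow : ∀ x : {x : Fin d → ℝ // l2 x = 1},
      1 ≤ sigmaMax B⁻¹ * l2 (fun i => ∑ j, B i j * x.1 j) := by
    intro x
    have h1 := l2_le_sigmaMax B⁻¹ (fun i => ∑ j, B i j * x.1 j)
    have h2 : (fun i => ∑ k, B⁻¹ i k * ∑ j, B k j * x.1 j) = x.1 := by
      change B⁻¹.mulVec (B.mulVec x.1) = x.1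
      rw [Matrix.mulVec_mulVec, Matrix.nonsing_inv_mul _ (isUnit_iff_ne_zero.2 hB),
        Matrix.one_mulVec]
    rw [h2, x.2] at h1
    exact h1
  have hs : 0 < sigmaMax B⁻¹ := by
    rcases (sigmaMax_nonneg B⁻¹).eq_or_lt with h | h
    · have := hlow ⟨_, hx⟩
      rw [← h, zero_mul] at this
      linarith
    · exact h
  have hmin : 0 < sigmaMin B := by
    refine lt_of_lt_of_le (inv_pos.2 hs) (le_ciInf fun x => ?_)
    rw [inv_le_iff_one_le_mul₀' hs]
    exact hlow x
  rw [le_div_iff₀ hmin, one_mul]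
  have hb : BddBelow (Set.range fun x : {x : Fin d → ℝ // l2 x = 1} =>
      l2 (fun i => ∑ j, B i j * x.1 j)) := ⟨0, by rintro _ ⟨x, rfl⟩; exact l2_nonneg _⟩
  exact (ciInf_le hb ⟨_, hx⟩).trans (le_ciSup (sigmaMax_bdd B) ⟨_, hx⟩)

theorem bilin_le {d : ℕ} (Wq Wk : Matrix (Fin d) (Fin d) ℝ) (x y : Fin d → ℝ) (M : ℝ)
    (hx : l2 x ^ 2 ≤ M) (hy : l2 y ^ 2 ≤ M) :
    ∑ a, (∑ b, |Wq a b| * |y b|) * (∑ b, |Wk a b| * |x b|) ≤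
      sigmaMax ((matAbs Wk).transpose * matAbs Wq) * M := by
  have e : ∑ a, (∑ b, |Wq a b| * |y b|) * (∑ b, |Wk a b| * |x b|)
      = ∑ b, |x b| * ∑ c, ((matAbs Wk).transpose * matAbs Wq) b c * |y c| := by
    simp only [Matrix.mul_apply, Matrix.transpose_apply, matAbs, Matrix.of_apply]
    simp only [Finset.mul_sum, Finset.sum_mul]
    rw [Finset.sum_comm]
    refine Finset.sum_congr rfl fun b _ => ?_
    rw [Finset.sum_comm]
    refine Finset.sum_congr rfl fun c _ => ?_
    exact Finset.sum_congr rfl fun a _ => by ring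
  rw [e]
  have h1 := Real.sum_mul_le_sqrt_mul_sqrt Finset.univ (fun b => |x b|)
    (fun b => ∑ c, ((matAbs Wk).transpose * matAbs Wq) b c * |y c|)
  have h2 := l2_le_sigmaMax ((matAbs Wk).transpose * matAbs Wq) (fun c => |y c|)
  have h3 := l2_abs x
  rw [l2_abs y] at h2
  change _ ≤ l2 (fun b => |x b|) * l2 _ at h1
  rw [h3] at h1
  have hs := sigmaMax_nonneg ((matAbs Wk).transpose * matAbs Wq)
  calc _ ≤ _ := h1
    _ ≤ l2 x * (sigmaMax ((matAbs Wk).transpose * matAbs Wq) * l2 y) :=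
      mul_le_mul_of_nonneg_left h2 (l2_nonneg _)
    _ = sigmaMax ((matAbs Wk).transpose * matAbs Wq) * (l2 x * l2 y) := by ring
    _ ≤ _ := mul_le_mul_of_nonneg_left (by nlinarith [sq_nonneg (l2 x - l2 y)]) hs

set_option maxHeartbeats 1000000 in
/-- the final scalar estimate. -/
theorem scalar_bound (d n : ℕ) (hd : 2 ≤ d) (K L ξ : ℝ) (hK : 0 ≤ K) (hL : K ≤ L)
    (hξ : 0 ≤ ξ) :
    ∃ C ε : ℝ, 0 < ε ∧ ε ≤ 1 / 2 ∧ ∀ u ρ : ℝ, 0 ≤ u → u ≤ ε → 0 ≤ ρ → ρ ≤ ε →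
      ξ * (Real.exp (vv ρ + 2 * (K * (Real.exp ((3 * d + 1) * vv u + 2 * vv ρ) - 1))
        + (2 * n + 2 + d) * vv u) - 1) ≤
      ξ * (1 + 4 * L) * ((2 * (n : ℝ) + 3 * d) * u + ρ) + C * (u ^ 2 + ρ ^ 2) := by
  have hd' : (2 : ℝ) ≤ d := by exact_mod_cast hd
  have hn : (0 : ℝ) ≤ n := Nat.cast_nonneg n
  set N : ℝ := 3 * d + 1 with hN
  have hN2 : 2 ≤ N := by linarith
  set P : ℝ := 2 * n + 2 + d with hP
  have hP1 : 1 ≤ P := by linarith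
  have key : ∀ x : ℝ, 0 ≤ x → x ≤ 1 → Real.exp x - 1 ≤ x + x ^ 2 := by
    intro x h0 h1
    have := Real.abs_exp_sub_one_sub_id_le (x := x) (by rwa [abs_of_nonneg h0])
    linarith [le_abs_self (Real.exp x - 1 - x)]
  set N3 : ℝ := 2 * P + 8 * K * N with hN3
  have hN3p : 2 ≤ N3 := by nlinarith
  set N2 : ℝ := 2 * P + 2 * K * (2 * N + 8 * N ^ 2) with hN2d
  refine ⟨ξ * (N2 + 2 * N3 ^ 2), 1 / (4 * (N + N3)), by positivity, ?_, ?_⟩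
  · rw [div_le_div_iff₀ (by positivity) (by norm_num)]; linarith
  intro u ρ hu hu1 hρ hρ1
  rw [le_div_iff₀ (by positivity)] at hu1 hρ1
  have hNu : u * (N + N3) ≤ 1 / 4 := by linarith
  have hNρ : ρ * (N + N3) ≤ 1 / 4 := by linarith
  have hN0 : 0 ≤ N := by linarith
  have hN30 : 0 ≤ N3 := by linarith
  have a1 : u * N ≤ 1 / 4 := by linarith [mul_nonneg hu hN30]
  have a2 : ρ * N ≤ 1 / 4 := by linarith [mul_nonneg hρ hN30]
  have a3 : u * N3 ≤ 1 / 4 := by linarith [mul_nonneg hu hN0]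
  have a4 : ρ * N3 ≤ 1 / 4 := by linarith [mul_nonneg hρ hN0]
  have b1 : u ≤ 1 / 2 := by linarith [mul_le_mul_of_nonneg_left hN2 hu]
  have b2 : ρ ≤ 1 / 2 := by linarith [mul_le_mul_of_nonneg_left hN2 hρ]
  set q : ℝ := u ^ 2 + ρ ^ 2 with hq
  have hq0 : 0 ≤ q := by positivity
  have hh : (u + ρ) ^ 2 ≤ 2 * q := by nlinarith [sq_nonneg (u - ρ)]
  have hvu : vv u ≤ 2 * u := by unfold vv; nlinarith
  have hvr : vv ρ ≤ 2 * ρ := by unfold vv; nlinarith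
  have hvu0 := vv_nonneg hu
  have hvr0 := vv_nonneg hρ
  set c : ℝ := N * vv u + 2 * vv ρ with hc
  have hc0 : 0 ≤ c := by positivity
  have hch : c ≤ 2 * N * (u + ρ) := by
    have : N * vv u ≤ N * (2 * u) := mul_le_mul_of_nonneg_left hvu (by linarith)
    rw [hc]
    linarith [mul_nonneg (sub_nonneg.2 hN2) hρ]
  have hc1 : c ≤ 1 := by linarith
  have hc2 : c ^ 2 ≤ 8 * N ^ 2 * q := by
    have : c ^ 2 ≤ (2 * N * (u + ρ)) ^ 2 := pow_le_pow_left₀ hc0 hch 2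
    linarith [mul_le_mul_of_nonneg_left hh (by positivity : 0 ≤ 4 * N ^ 2)]
  have hc3 : c ≤ N * u + 2 * ρ + 2 * N * q := by
    have : c = N * u + 2 * ρ + 2 * N * u ^ 2 + 4 * ρ ^ 2 := by rw [hc]; unfold vv; ring
    rw [this, hq]
    linarith [mul_nonneg (sub_nonneg.2 hN2) (sq_nonneg ρ)]
  have hE := key c hc0 hc1
  have hE1 : Real.exp c - 1 ≤ 2 * c := by nlinarith
  have hE0 : 0 ≤ Real.exp c - 1 := by linarith [Real.one_le_exp hc0]
  set E := Real.exp c - 1 with hEd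
  have hKE : K * E ≤ K * (N * u + 2 * ρ + (2 * N + 8 * N ^ 2) * q) :=
    mul_le_mul_of_nonneg_left (by linarith) hK
  have hKE1 : K * E ≤ K * (4 * N * (u + ρ)) := mul_le_mul_of_nonneg_left (by linarith) hK
  set T := vv ρ + 2 * (K * E) + P * vv u with hT
  have hT0 : 0 ≤ T := by positivity
  have hTh : T ≤ N3 * (u + ρ) := by
    have : P * vv u ≤ P * (2 * u) := mul_le_mul_of_nonneg_left hvu (by linarith)
    rw [hT, hN3]
    linarith [mul_nonneg (sub_nonneg.2 hP1) hρ]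
  have hT1 : T ≤ 1 := by linarith
  have hT2 : T ^ 2 ≤ 2 * N3 ^ 2 * q := by
    have : T ^ 2 ≤ (N3 * (u + ρ)) ^ 2 := pow_le_pow_left₀ hT0 hTh 2
    linarith [mul_le_mul_of_nonneg_left hh (by positivity : 0 ≤ N3 ^ 2)]
  have hT3 : T ≤ ρ + P * u + 2 * K * (N * u + 2 * ρ) + N2 * q := by
    have e1 : P * vv u = P * u + 2 * P * u ^ 2 := by unfold vv; ring
    have e2 : vv ρ = ρ + 2 * ρ ^ 2 := rfl
    rw [hT, hN2d, e1, e2]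
    have : 2 * ρ ^ 2 + 2 * P * u ^ 2 ≤ 2 * P * q := by
      rw [hq]; linarith [mul_nonneg (sub_nonneg.2 hP1) (sq_nonneg ρ)]
    linarith
  have hfin := key T hT0 hT1
  have hlin : ρ + P * u + 2 * K * (N * u + 2 * ρ) ≤
      (1 + 4 * L) * ((2 * (n : ℝ) + 3 * d) * u + ρ) := by
    have l1 : P * u ≤ (2 * (n : ℝ) + 3 * d) * u :=
      mul_le_mul_of_nonneg_right (by linarith) hu
    have l2 : N * u ≤ 2 * ((2 * (n : ℝ) + 3 * d) * u) := by
      rw [← mul_assoc]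
      exact mul_le_mul_of_nonneg_right (by linarith) hu
    have l3 : 2 * K * (N * u + 2 * ρ) ≤ 2 * K * (2 * ((2 * (n : ℝ) + 3 * d) * u) + 2 * ρ) :=
      mul_le_mul_of_nonneg_left (by linarith) (by linarith)
    have l4 : K * ((2 * (n : ℝ) + 3 * d) * u + ρ) ≤ L * ((2 * (n : ℝ) + 3 * d) * u + ρ) :=
      mul_le_mul_of_nonneg_right hL (by positivity)
    linarith
  calc ξ * (Real.exp T - 1) ≤ ξ * ((1 + 4 * L) * ((2 * (n : ℝ) + 3 * d) * u + ρ)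
        + (N2 + 2 * N3 ^ 2) * q) := mul_le_mul_of_nonneg_left (by linarith) hξ
    _ = _ := by ring

theorem softmax_nonneg {m : ℕ} (s : Fin m → ℝ) (i : Fin m) : 0 ≤ softmax s i :=
  div_nonneg (Real.exp_pos _).le (Finset.sum_nonneg fun j _ => (Real.exp_pos _).le)

/-- deterministic bound for a single entry. -/
theorem entry_bound {d n : ℕ} (Wq Wk Wv : Matrix (Fin d) (Fin d) ℝ)
    (X Xh : Fin n → Fin d → ℝ) {u w : ℝ} (hu0 : 0 ≤ u) (hu : u ≤ 1 / 2) (hw : 0 ≤ w)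
    (hX : ∀ t a, Near w (Xh t a) (X t a) |X t a|) (r : Fin n → Fin d → ℝ)
    (hr : FlAttn u Wq Wk Wv Xh r) (t : Fin n) (i : Fin d) :
    |r t i - attn Wq Wk Wv X t i| ≤
      (Real.exp (w + 2 * (((1 / Real.sqrt d) *
          (sigmaMax ((matAbs Wk).transpose * matAbs Wq) * ⨆ t : Fin n, l2 (X t) ^ 2)) *
          (Real.exp ((3 * d + 1) * vv u + 2 * w) - 1)) + (2 * n + 2 + d) * vv u) - 1) *
      (∑ j : Fin (t.1 + 1), (∑ a, |Wv i a| * |prefixCols X t j a|) *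
        softmax (simScores Wq Wk (prefixCols X t)) j) := by
  obtain ⟨s, psi, z, hs, hpsi, hz, hrt⟩ := hr t
  set M := ⨆ t : Fin n, l2 (X t) ^ 2 with hM
  have hMle : ∀ t, l2 (X t) ^ 2 ≤ M := fun t =>
    le_ciSup (f := fun t : Fin n => l2 (X t) ^ 2) (Set.finite_range _).bddAbove t
  have hE0 : 0 ≤ Real.exp ((3 * d + 1) * vv u + 2 * w) - 1 := by
    have := vv_nonneg hu0
    linarith [Real.one_le_exp (by positivity : 0 ≤ (3 * d + 1) * vv u + 2 * w)]
  set E := Real.exp ((3 * d + 1) * vv u + 2 * w) - 1 with hE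
  have hZ : ∀ j a, Near w (prefixCols Xh t j a) (prefixCols X t j a) |prefixCols X t j a| :=
    fun j a => hX _ a
  have h1 : ∀ j, |s j - simScores Wq Wk (prefixCols X t) j| ≤
      ((1 / Real.sqrt d) * (sigmaMax ((matAbs Wk).transpose * matAbs Wq) * M)) * E := by
    intro j
    refine (sim_near hu0 hu hZ hs j).trans ?_
    rw [mul_comm]
    refine mul_le_mul_of_nonneg_right (mul_le_mul_of_nonneg_left ?_ (by positivity)) hE0
    exact bilin_le Wq Wk _ _ M (hMle _) (hMle _)
  have h2 := softmax_ef hu0 hu h1 hpsi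
  set D := ((1 / Real.sqrt d) * (sigmaMax ((matAbs Wk).transpose * matAbs Wq) * M)) * E
  have h3 := fun a => Near.dot hu0 hu (hz a) (fun j => hZ j a) h2
  have h4 := (Near.dot hu0 hu (hrt i) (fun a => Near.self (Wv i a)) h3).2
  have e1 : attn Wq Wk Wv X t i = ∑ a, Wv i a * ∑ j, prefixCols X t j a *
      softmax (simScores Wq Wk (prefixCols X t)) j := by
    unfold attn
    refine Finset.sum_congr rfl fun a _ => ?_
    congr 1
    exact Finset.sum_congr rfl fun j _ => mul_comm _ _
  have e2 : (∑ j : Fin (t.1 + 1), (∑ a, |Wv i a| * |prefixCols X t j a|) *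
        softmax (simScores Wq Wk (prefixCols X t)) j) = ∑ a, |Wv i a| * ∑ j, |prefixCols X t j a| *
      softmax (simScores Wq Wk (prefixCols X t)) j := by
    simp only [Finset.sum_mul, Finset.mul_sum]
    rw [Finset.sum_comm]
    exact Finset.sum_congr rfl fun a _ => Finset.sum_congr rfl fun j _ => by ring
  rw [e1, e2]
  refine h4.trans (mul_le_mul_of_nonneg_right ?_ ?_)
  · refine sub_le_sub_right (Real.exp_le_exp.2 ?_) 1
    have hv := vv_nonneg hu0
    have ht : ((t.1 : ℝ) + 1) ≤ n := by exact_mod_cast t.2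
    push_cast
    nlinarith [mul_le_mul_of_nonneg_right ht hv]
  · exact Finset.sum_nonneg fun a _ => mul_nonneg (abs_nonneg _)
      (Finset.sum_nonneg fun j _ => mul_nonneg (abs_nonneg _) (softmax_nonneg _ _))

theorem near_of_rho {d n : ℕ} {Xh X : Fin n → Fin d → ℝ} (hfin : rhoM Xh X ≠ ⊤)
    (h2 : (rhoM Xh X).toReal ≤ 1 / 2) (t : Fin n) (a : Fin d) :
    Near (vv (rhoM Xh X).toReal) (Xh t a) (X t a) |X t a| := by
  have h1 : (if X t a = 0 then (if Xh t a = 0 then (0 : ℝ≥0∞) else ⊤)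
        else ENNReal.ofReal (|Xh t a - X t a| / |X t a|)) ≤ rhoM Xh X :=
    (le_iSup (fun i => (if X t i = 0 then (if Xh t i = 0 then (0 : ℝ≥0∞) else ⊤)
        else ENNReal.ofReal (|Xh t i - X t i| / |X t i|))) a).trans
      (le_iSup (fun t => rhoV (Xh t) (X t)) t)
  by_cases hx : X t a = 0
  · rw [if_pos hx] at h1
    by_cases hy : Xh t a = 0
    · rw [hx, hy]; exact ⟨by simp, by simp⟩
    · rw [if_neg hy] at h1
      exact absurd (top_le_iff.1 h1) hfin
  · rw [if_neg hx] at h1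
    have h3 : |Xh t a - X t a| / |X t a| ≤ (rhoM Xh X).toReal :=
      (ENNReal.ofReal_le_iff_le_toReal hfin).1 h1
    have h4 : EF (vv (rhoM Xh X).toReal) (Xh t a / X t a) := by
      refine EF.of_abs h2 ?_
      rwa [← abs_div, sub_div, div_self hx] at h3
    have h5 := h4.near_mul (X t a)
    rwa [mul_div_cancel₀ _ hx] at h5

/-- rounding error of the self-attention at a perturbed argument. -/
theorem attention_perturbed {d n : ℕ} (hd : 2 ≤ d) (Wq Wk Wv : Matrix (Fin d) (Fin d) ℝ)
    (hdet : (Wk.transpose * Wq).det ≠ 0) (X : Fin n → Fin d → ℝ)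
    (hA : ∀ t i, attn Wq Wk Wv X t i ≠ 0) :
    ∃ βs : ℝ, 0 < βs ∧ βs ≤ 1 ∧ ∀ β : ℝ, 0 ≤ β → β < βs →
      ∃ C u0 : ℝ, 0 < u0 ∧ ∀ u : ℝ, 0 < u → u ≤ u0 →
        ∀ Xh : Fin n → Fin d → ℝ,
          rhoM Xh X ≤ ENNReal.ofReal (β / kccM (attn Wq Wk Wv) X) →
        ∀ r : Fin n → Fin d → ℝ, FlAttn u Wq Wk Wv Xh r →
          rhoM r (attn Wq Wk Wv X) ≤ ENNReal.ofReal
            (xiAttn Wq Wk Wv X *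
              (1 + 4 / Real.sqrt d * sigmaMax ((matAbs Wk).transpose * matAbs Wq) *
                (sigmaMax (Wk.transpose * Wq) / sigmaMin (Wk.transpose * Wq)) *
                (⨆ t : Fin n, l2 (X t) ^ 2)) *
              ((2 * (n : ℝ) + 3 * d) * u + (rhoM Xh X).toReal)
            + C * (u ^ 2 + (rhoM Xh X).toReal ^ 2)) := by
  have hK : 0 ≤ (1 / Real.sqrt d) *
      (sigmaMax ((matAbs Wk).transpose * matAbs Wq) * ⨆ t : Fin n, l2 (X t) ^ 2) :=
    mul_nonneg (by positivity) (mul_nonneg (sigmaMax_nonneg _)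
      (Real.iSup_nonneg fun t => sq_nonneg _))
  have hcond := one_le_cond hd _ hdet
  have hterm : ∀ (t : Fin n) (i : Fin d), (∑ j : Fin (t.1 + 1),
      (∑ a, |Wv i a| * |prefixCols X t j a|) *
        softmax (simScores Wq Wk (prefixCols X t)) j) ≤
      xiAttn Wq Wk Wv X * |attn Wq Wk Wv X t i| := by
    intro t i
    have e1 : attn Wq Wk Wv X t i = ∑ j : Fin (t.1 + 1),
        (∑ a, Wv i a * prefixCols X t j a) *
        softmax (simScores Wq Wk (prefixCols X t)) j := by
      unfold attn
      simp only [Finset.sum_mul, Finset.mul_sum]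
      rw [Finset.sum_comm]
      exact Finset.sum_congr rfl fun a _ => Finset.sum_congr rfl fun j _ => by ring
    rw [← div_le_iff₀ (abs_pos.2 (hA t i)), e1]
    exact le_ciSup (f := fun p : Fin d × Fin n =>
      (∑ j : Fin (p.2.1 + 1), (∑ a, |Wv p.1 a| * |prefixCols X p.2 j a|) *
        softmax (simScores Wq Wk (prefixCols X p.2)) j) /
      |∑ j : Fin (p.2.1 + 1), (∑ a, Wv p.1 a * prefixCols X p.2 j a) *
        softmax (simScores Wq Wk (prefixCols X p.2)) j|)
      (Set.finite_range _).bddAbove (i, t)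
  have hξ : 0 ≤ xiAttn Wq Wk Wv X :=
    Real.iSup_nonneg fun p => div_nonneg (Finset.sum_nonneg fun j _ =>
      mul_nonneg (Finset.sum_nonneg fun a _ => by positivity) (softmax_nonneg _ _))
      (abs_nonneg _)
  have hL := mul_le_mul_of_nonneg_left hcond hK
  rw [mul_one] at hL
  obtain ⟨C, ε, hε, hε2, hC⟩ := scalar_bound d n hd _ _ _ hK hL hξ
  obtain ⟨βs, hβ0, hβ1, hβ⟩ : ∃ βs : ℝ, 0 < βs ∧ βs ≤ 1 ∧ ∀ β : ℝ, 0 ≤ β → β < βs →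
      β / kccM (attn Wq Wk Wv) X ≤ ε := by
    rcases lt_or_ge 0 (kccM (attn Wq Wk Wv) X) with hk | hk
    · refine ⟨min 1 (ε * kccM (attn Wq Wk Wv) X), by positivity, min_le_left _ _, ?_⟩
      intro β _ hb
      rw [div_le_iff₀ hk]
      exact (hb.trans_le (min_le_right _ _)).le
    · exact ⟨1, one_pos, le_rfl, fun β h0 _ =>
        (div_nonpos_of_nonneg_of_nonpos h0 hk).trans hε.le⟩
  refine ⟨βs, hβ0, hβ1, fun β hb0 hb1 => ⟨C, ε, hε, fun u hu hu1 Xh hXh r hr => ?_⟩⟩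
  have hρ : rhoM Xh X ≤ ENNReal.ofReal ε :=
    hXh.trans (ENNReal.ofReal_le_ofReal (hβ β hb0 hb1))
  have hfin : rhoM Xh X ≠ ⊤ := ne_top_of_le_ne_top ENNReal.ofReal_ne_top hρ
  have hρ1 : (rhoM Xh X).toReal ≤ ε := ENNReal.toReal_le_of_le_ofReal hε.le hρ
  have hρ0 : 0 ≤ (rhoM Xh X).toReal := ENNReal.toReal_nonneg
  have hnear := near_of_rho hfin (hρ1.trans hε2)
  refine iSup_le fun t => iSup_le fun i => ?_
  rw [if_neg (hA t i)]
  refine ENNReal.ofReal_le_ofReal ?_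
  rw [div_le_iff₀ (abs_pos.2 (hA t i))]
  have h1 := entry_bound Wq Wk Wv X Xh hu.le (hu1.trans hε2) (vv_nonneg hρ0) hnear r hr t i
  have h2 := hC u _ hu.le hu1 hρ0 hρ1
  have hv := vv_nonneg hu.le
  have hw := vv_nonneg hρ0
  refine h1.trans ((mul_le_mul_of_nonneg_left (hterm t i) ?_).trans ?_)
  · rw [sub_nonneg]
    refine Real.one_le_exp ?_
    have hE0 : 0 ≤ Real.exp ((3 * d + 1) * vv u + 2 * vv (rhoM Xh X).toReal) - 1 := by
      linarith [Real.one_le_exp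
        (by positivity : 0 ≤ (3 * d + 1) * vv u + 2 * vv (rhoM Xh X).toReal)]
    have := mul_nonneg hK hE0
    positivity
  · rw [← mul_assoc]
    refine mul_le_mul_of_nonneg_right ?_ (abs_nonneg _)
    rw [mul_comm]
    refine h2.trans (le_of_eq ?_)
    ring

end TR
end
end

section
/- Let s ∈ ℝ^n be nonzero and β > 0. For every ŝ ∈ ℝ^n with ρ_c(ŝ, s) ≤ β, the floating-point evaluation of the softmax at ŝ satisfies, for all sufficiently small u and ρ_c(ŝ, s): ρ_c( fl(ψ(ŝ)), ψ(s) ) ≤ (n + 3) u + 2‖s‖_∞ ρ_c(ŝ, s) + C·(u² + ρ_c(ŝ, s)²) for a constant C independent of u and ŝ. -/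
open scoped BigOperators ENNReal

noncomputable section

namespace TR

theorem aux_fp {u a b : ℝ} (hu : 0 < u) (hu2 : u ≤ 1 / 2) (hb : 0 ≤ b) (h : Fp u a b) :
    Real.exp (-(u + 2 * u ^ 2)) * b ≤ a ∧ a ≤ Real.exp (u + 2 * u ^ 2) * b := by
  obtain ⟨δ, hδ, rfl⟩ := h
  obtain ⟨h1, h2⟩ := abs_le.mp hδ
  have e1 : u + 2 * u ^ 2 + 1 ≤ Real.exp (u + 2 * u ^ 2) := Real.add_one_le_exp _
  have e2 : Real.exp (-(u + 2 * u ^ 2)) ≤ 1 - u := by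
    rw [Real.exp_neg, inv_le_comm₀ (Real.exp_pos _) (by linarith)]
    refine le_trans ?_ e1
    rw [inv_le_iff_one_le_mul₀ (by linarith)]
    nlinarith [mul_nonneg (sq_nonneg u) (by linarith : (0:ℝ) ≤ 1 - 2 * u)]
  constructor
  · rw [mul_comm b]
    exact mul_le_mul_of_nonneg_right (by linarith) hb
  · rw [mul_comm b]
    exact mul_le_mul_of_nonneg_right (by nlinarith [sq_nonneg u]) hb

theorem aux_sum {u v : ℝ} (hv : 0 ≤ v)
    (hfp : ∀ a b, 0 ≤ b → Fp u a b → Real.exp (-v) * b ≤ a ∧ a ≤ Real.exp v * b)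
    (l : List ℝ) (t : ℝ) (h : FlSumL u l t) (hl : ∀ x ∈ l, 0 ≤ x) :
    Real.exp (-(l.length * v)) * l.sum ≤ t ∧ t ≤ Real.exp (l.length * v) * l.sum := by
  induction h with
  | nil => simp
  | single x =>
    have hx : 0 ≤ x := hl x (by simp)
    simp only [List.length_singleton, Nat.cast_one, one_mul, List.sum_singleton]
    have a1 : Real.exp (-v) ≤ 1 := Real.exp_le_one_iff.mpr (by linarith)
    have a2 : 1 ≤ Real.exp v := Real.one_le_exp hv
    constructor <;> nlinarith
  | cons x y l s r hs hr ih =>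
    have hx : 0 ≤ x := hl x (by simp)
    have ih := ih (fun z hz => hl z (List.mem_cons_of_mem _ hz))
    have hS : 0 ≤ (y :: l).sum := List.sum_nonneg (fun z hz => hl z (List.mem_cons_of_mem _ hz))
    generalize hL : y :: l = L at *
    have hs0 : 0 ≤ s := le_trans (by positivity) ih.1
    obtain ⟨h1, h2⟩ := hfp r (x + s) (by linarith) hr
    have hk : 0 ≤ (L.length : ℝ) * v := by positivity
    have a1 : Real.exp (-(L.length * v)) ≤ 1 := Real.exp_le_one_iff.mpr (by linarith)
    have a2 : 1 ≤ Real.exp (L.length * v) := Real.one_le_exp hk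
    have e1 : Real.exp (-((x :: L).length * v)) = Real.exp (-v) * Real.exp (-(L.length * v)) := by
      rw [← Real.exp_add]; congr 1; push_cast [List.length_cons]; ring
    have e2 : Real.exp ((x :: L).length * v) = Real.exp v * Real.exp (L.length * v) := by
      rw [← Real.exp_add]; congr 1; push_cast [List.length_cons]; ring
    rw [e1, e2, List.sum_cons, mul_assoc, mul_assoc]
    constructor
    · refine le_trans (mul_le_mul_of_nonneg_left ?_ (Real.exp_pos _).le) h1
      nlinarith [ih.1]
    · refine le_trans h2 (mul_le_mul_of_nonneg_left ?_ (Real.exp_pos _).le)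
      nlinarith [ih.2]

theorem aux_exp {T : ℝ} (hT : 0 ≤ T) : Real.exp T - 1 ≤ T + T ^ 2 * Real.exp T := by
  have h := Real.add_one_le_exp (-T)
  have h2 : Real.exp (-T) * Real.exp T = 1 := by rw [← Real.exp_add]; simp
  have h3 : Real.exp T - 1 ≤ T * Real.exp T := by nlinarith [Real.exp_pos T]
  nlinarith

theorem aux_rho {n : ℕ} {s sh : Fin n → ℝ} {β : ℝ} (h : rhoV sh s ≤ ENNReal.ofReal β) (i : Fin n) :
    |sh i - s i| ≤ (rhoV sh s).toReal * |s i| := by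
  have hfin : rhoV sh s ≠ ⊤ := ne_top_of_le_ne_top ENNReal.ofReal_ne_top h
  have hi : (if s i = 0 then (if sh i = 0 then (0 : ℝ≥0∞) else ⊤)
        else ENNReal.ofReal (|sh i - s i| / |s i|)) ≤ rhoV sh s :=
    le_iSup (fun i => (if s i = 0 then (if sh i = 0 then (0 : ℝ≥0∞) else ⊤)
        else ENNReal.ofReal (|sh i - s i| / |s i|))) i
  by_cases h0 : s i = 0
  · by_cases h1 : sh i = 0
    · simp [h0, h1]
    · rw [if_pos h0, if_neg h1] at hi
      exact absurd (top_le_iff.mp hi) hfin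
  · rw [if_neg h0] at hi
    have := (ENNReal.ofReal_le_iff_le_toReal hfin).mp hi
    rwa [div_le_iff₀ (abs_pos.mpr h0)] at this

theorem aux_core {n : ℕ} (s sh r : Fin n → ℝ) (u v a : ℝ) (hv : 0 ≤ v)
    (hfp : ∀ a b, 0 ≤ b → Fp u a b → Real.exp (-v) * b ≤ a ∧ a ≤ Real.exp v * b)
    (hd : ∀ i, |sh i - s i| ≤ a) (h : FlSoftmax u sh r) (i : Fin n) :
    Real.exp (-(2 * a + (n + 3) * v)) * softmax s i ≤ r i ∧
      r i ≤ Real.exp (2 * a + (n + 3) * v) * softmax s i := by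
  obtain ⟨ex, hex, tot, htot, hr⟩ := h
  have hb : ∀ j, Real.exp (-(a + v)) * Real.exp (s j) ≤ ex j ∧
      ex j ≤ Real.exp (a + v) * Real.exp (s j) := by
    intro j
    obtain ⟨h1, h2⟩ := hfp _ _ (Real.exp_pos _).le (hex j)
    obtain ⟨h3, h4⟩ := abs_le.mp (hd j)
    rw [← Real.exp_add] at h1 h2 ⊢
    rw [← Real.exp_add]
    exact ⟨le_trans (Real.exp_le_exp.mpr (by linarith)) h1,
      le_trans h2 (Real.exp_le_exp.mpr (by linarith))⟩
  have hex0 : ∀ j, 0 < ex j := fun j => lt_of_lt_of_le (by positivity) (hb j).1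
  have hsum := aux_sum hv hfp _ _ htot (by
    intro x hx
    obtain ⟨j, rfl⟩ := (List.mem_ofFn' _ _).mp hx
    exact (hex0 j).le)
  rw [List.length_ofFn, List.sum_ofFn] at hsum
  have hS : 0 < ∑ j, Real.exp (s j) :=
    Finset.sum_pos (fun j _ => Real.exp_pos _) ⟨i, Finset.mem_univ _⟩
  have hl : Real.exp (-(a + v)) * ∑ j, Real.exp (s j) ≤ ∑ j, ex j := by
    rw [Finset.mul_sum]; exact Finset.sum_le_sum (fun j _ => (hb j).1)
  have hu : ∑ j, ex j ≤ Real.exp (a + v) * ∑ j, Real.exp (s j) := by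
    rw [Finset.mul_sum]; exact Finset.sum_le_sum (fun j _ => (hb j).2)
  have t1 : Real.exp (-(a + (n + 1) * v)) * ∑ j, Real.exp (s j) ≤ tot := by
    refine le_trans (le_of_eq ?_) (le_trans (mul_le_mul_of_nonneg_left hl (Real.exp_pos _).le) hsum.1)
    rw [← mul_assoc, ← Real.exp_add]; congr 2; ring
  have t2 : tot ≤ Real.exp (a + (n + 1) * v) * ∑ j, Real.exp (s j) := by
    refine le_trans hsum.2 (le_trans (mul_le_mul_of_nonneg_left hu (Real.exp_pos _).le) (le_of_eq ?_))
    rw [← mul_assoc, ← Real.exp_add]; congr 2; ring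
  have ht0 : 0 < tot := lt_of_lt_of_le (by positivity) t1
  obtain ⟨h1, h2⟩ := hfp _ _ (div_pos (hex0 i) ht0).le (hr i)
  constructor
  · refine le_trans ?_ h1
    calc _ = Real.exp (-v) * (Real.exp (-(a + v)) * Real.exp (s i) /
          (Real.exp (a + (n + 1) * v) * ∑ j, Real.exp (s j))) := by
          have : -(2 * a + (n + 3) * v) = -v + (-(a + v)) + (-(a + (n + 1) * v)) := by ring
          rw [this, Real.exp_add, Real.exp_add, Real.exp_neg (a + (n + 1) * v), softmax]
          field_simp
      _ ≤ _ := mul_le_mul_of_nonneg_left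
          (div_le_div₀ (hex0 i).le (hb i).1 ht0 t2) (Real.exp_pos _).le
  · refine le_trans h2 ?_
    calc _ ≤ Real.exp v * (Real.exp (a + v) * Real.exp (s i) /
          (Real.exp (-(a + (n + 1) * v)) * ∑ j, Real.exp (s j))) :=
          mul_le_mul_of_nonneg_left
          (div_le_div₀ (by positivity) (hb i).2 (by positivity) t1) (Real.exp_pos _).le
      _ = _ := by
          have : 2 * a + (n + 3) * v = v + (a + v) + (a + (n + 1) * v) := by ring
          rw [this, Real.exp_add (v + (a + v)), Real.exp_add v (a + v), Real.exp_neg (a + (n + 1) * v), softmax]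
          field_simp

/-- rounding error of the softmax at a perturbed argument. -/
theorem softmax_perturbed {n : ℕ} (s : Fin n → ℝ) (hs : s ≠ 0) (β : ℝ) (hβ : 0 < β) :
    ∃ C u0 : ℝ, 0 < u0 ∧ ∀ u : ℝ, 0 < u → u ≤ u0 →
      ∀ sh : Fin n → ℝ, rhoV sh s ≤ ENNReal.ofReal β →
      ∀ r : Fin n → ℝ, FlSoftmax u sh r →
        rhoV r (softmax s) ≤ ENNReal.ofReal
          (((n : ℝ) + 3) * u + 2 * linf s * (rhoV sh s).toReal
            + C * (u ^ 2 + (rhoV sh s).toReal ^ 2)) := by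
  classical
  set M := linf s with hM
  have hMi : ∀ i, |s i| ≤ M := fun i =>
    le_ciSup (f := fun i => |s i|) (Set.finite_range _).bddAbove i
  have hM0 : 0 ≤ M := Real.iSup_nonneg (fun i => abs_nonneg _)
  refine ⟨2 * ((n : ℝ) + 3) + (8 * ((n : ℝ) + 3) ^ 2 + 8 * M ^ 2) *
    Real.exp (2 * (β * M) + (n + 3)), 1 / 2, by norm_num, ?_⟩
  intro u hu hu2 sh hsh r hr
  have hd := aux_rho hsh
  have hρ : (rhoV sh s).toReal ≤ β := ENNReal.toReal_le_of_le_ofReal hβ.le hsh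
  have hρ0 : 0 ≤ (rhoV sh s).toReal := ENNReal.toReal_nonneg
  generalize (rhoV sh s).toReal = ρ at *
  have hv0 : 0 ≤ u + 2 * u ^ 2 := by positivity
  have hcore := aux_core s sh r u (u + 2 * u ^ 2) (ρ * M) hv0
    (fun a b hb h => aux_fp hu hu2 hb h)
    (fun i => (hd i).trans (mul_le_mul_of_nonneg_left (hMi i) hρ0)) hr
  refine iSup_le fun i => ?_
  obtain ⟨c1, c2⟩ := hcore i
  have hp : 0 < softmax s i :=
    div_pos (Real.exp_pos _) (Finset.sum_pos (fun j _ => Real.exp_pos _) ⟨i, Finset.mem_univ _⟩)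
  rw [if_neg hp.ne']
  apply ENNReal.ofReal_le_ofReal
  rw [abs_of_pos hp]
  set T := 2 * (ρ * M) + ((n : ℝ) + 3) * (u + 2 * u ^ 2) with hT
  have hT0 : 0 ≤ T := by positivity
  have hv1 : u + 2 * u ^ 2 ≤ 2 * u := by nlinarith
  have hTb : T ≤ 2 * (β * M) + (n + 3) := by
    have := mul_le_mul_of_nonneg_right hρ hM0
    have h2 : ((n : ℝ) + 3) * (u + 2 * u ^ 2) ≤ ((n : ℝ) + 3) * 1 :=
      mul_le_mul_of_nonneg_left (by linarith) (by positivity)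
    linarith
  have hE : |r i - softmax s i| / softmax s i ≤ Real.exp T - 1 := by
    rw [div_le_iff₀ hp, abs_le]
    have h2 : Real.exp (-T) * Real.exp T = 1 := by rw [← Real.exp_add]; simp
    have h3 : 2 ≤ Real.exp (-T) + Real.exp T := by
      nlinarith [sq_nonneg (Real.exp (-T) - Real.exp T), Real.exp_pos T, Real.exp_pos (-T)]
    constructor <;> nlinarith
  refine hE.trans ((aux_exp hT0).trans ?_)
  have hT2 : T ^ 2 ≤ (8 * ((n : ℝ) + 3) ^ 2 + 8 * M ^ 2) * (u ^ 2 + ρ ^ 2) := by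
    have hle : T ≤ 2 * (ρ * M) + ((n : ℝ) + 3) * (2 * u) := by
      have := mul_le_mul_of_nonneg_left hv1 (by positivity : (0:ℝ) ≤ (n : ℝ) + 3)
      linarith
    have := pow_le_pow_left₀ hT0 hle 2
    nlinarith [sq_nonneg (2 * (ρ * M) - ((n : ℝ) + 3) * (2 * u)),
      sq_nonneg (M * u), sq_nonneg (((n : ℝ) + 3) * ρ)]
  have hfin : T ^ 2 * Real.exp T ≤ (8 * ((n : ℝ) + 3) ^ 2 + 8 * M ^ 2) * (u ^ 2 + ρ ^ 2) *
      Real.exp (2 * (β * M) + (n + 3)) :=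
    mul_le_mul hT2 (Real.exp_le_exp.mpr hTb) (Real.exp_pos _).le (by positivity)
  have : 0 ≤ ((n : ℝ) + 3) * ρ ^ 2 := by positivity
  rw [hT] at hfin ⊢
  linarith

end TR
end
end

section
/- Let x ∈ ℝ^d with centred vector c̊(x) = x − μ(x)e having all entries nonzero, where μ(x) = (1/d)Σᵢxᵢ and e is the all-ones vector. The floating-point evaluation of the centring satisfies, for all sufficiently small u: ρ_c( fl(c̊(x)), c̊(x) ) ≤ ( 1 + ‖x‖₁/‖c̊(x)‖_{−∞} ) u + C u² for a constant C independent of u, where ‖y‖_{−∞} = min_i |y_i| and ‖x‖₁ = Σᵢ|xᵢ|. -/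
open scoped BigOperators ENNReal

noncomputable section

namespace TR

/-- error bound for recursive summation. -/
theorem flSumL_err (u : ℝ) (hu : 0 < u) (l : List ℝ) (s : ℝ) (h : FlSumL u l s) :
    |s - l.sum| ≤ ((1 + u) ^ (l.length - 1) - 1) * (l.map (fun t => |t|)).sum ∧
      |l.sum| ≤ (l.map (fun t => |t|)).sum := by
  induction h with
  | nil => simp
  | single x => simp
  | cons x y l s r hs hr ih =>
    obtain ⟨δ, hδ, rfl⟩ := hr
    obtain ⟨ih1, ih2⟩ := ih
    have hl : (x :: y :: l).length - 1 = ((y :: l).length - 1) + 1 := by simp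
    have hs1 : (x :: y :: l).sum = x + (y :: l).sum := List.sum_cons
    have hs2 : (List.map (fun t => |t|) (x :: y :: l)).sum
        = |x| + (List.map (fun t => |t|) (y :: l)).sum := by
      rw [List.map_cons, List.sum_cons]
    rw [hl, hs1, hs2]
    clear hs1 hs2
    generalize (y :: l).length - 1 = k at *
    generalize (List.map (fun t => |t|) (y :: l)).sum = A at *
    generalize (y :: l).sum = S at *
    have hxS : |x + S| ≤ |x| + A := (abs_add_le _ _).trans (by linarith)
    refine ⟨?_, hxS⟩
    have h1 : (1 : ℝ) ≤ (1 + u) ^ k := one_le_pow₀ (by linarith)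
    have e : (x + s) * (1 + δ) - (x + S) = (x + S) * δ + (s - S) * (1 + δ) := by ring
    have hd : |1 + δ| ≤ 1 + u := (abs_add_le _ _).trans (by simpa using hδ)
    have hA : 0 ≤ A := (abs_nonneg _).trans ih2
    rw [e]
    calc |(x + S) * δ + (s - S) * (1 + δ)| ≤ |x + S| * |δ| + |s - S| * |1 + δ| := by
          rw [← abs_mul, ← abs_mul]; exact abs_add_le _ _
      _ ≤ (|x| + A) * u + (((1 + u) ^ k - 1) * A) * (1 + u) := by
          have : 0 ≤ ((1 + u) ^ k - 1) * A := mul_nonneg (by linarith) hA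
          gcongr
      _ ≤ ((1 + u) ^ (k + 1) - 1) * (|x| + A) := by
          have : 0 ≤ |x| * (((1 + u) ^ k - 1) * (1 + u)) :=
            mul_nonneg (abs_nonneg _) (mul_nonneg (by linarith) (by linarith))
          rw [pow_succ]
          linarith

/-- second-order bound for `(1+u)^n`. -/
theorem pow_second_order (n : ℕ) :
    ∃ K : ℝ, 0 ≤ K ∧ ∀ u : ℝ, 0 < u → u ≤ 1 → (1 + u) ^ n - 1 ≤ n * u + K * u ^ 2 := by
  induction n with
  | zero => exact ⟨0, le_rfl, fun u _ _ => by simp⟩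
  | succ n ih =>
    obtain ⟨K, hK, h⟩ := ih
    refine ⟨2 * K + n, by positivity, fun u hu hu1 => ?_⟩
    have h1 := h u hu hu1
    have h2 : (1 + u) ^ (n + 1) ≤ (1 + n * u + K * u ^ 2) * (1 + u) := by
      rw [pow_succ]
      gcongr
      linarith
    have h3 : 0 ≤ K * u ^ 2 * (1 - u) := mul_nonneg (by positivity) (by linarith)
    push_cast
    linarith

/-- forward rounding error of the centring. -/
theorem centring_rounding {d : ℕ} (x : Fin d → ℝ) (hx : ∀ i, centr x i ≠ 0) :
    ∃ C u0 : ℝ, 0 < u0 ∧ ∀ u : ℝ, 0 < u → u ≤ u0 →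
      ∀ r : Fin d → ℝ, FlCentr u x r →
        rhoV r (centr x) ≤
          ENNReal.ofReal ((1 + l1 x / lminf (centr x)) * u + C * u ^ 2) := by
  obtain ⟨K, hK, hpow⟩ := pow_second_order d
  refine ⟨(2 * K + d) * (l1 x / d) / lminf (centr x), 1, one_pos, ?_⟩
  rintro u hu hu1 r ⟨s, m, hs, ⟨δ, hδ, rfl⟩, hr⟩
  unfold rhoV
  refine iSup_le fun i => ?_
  rw [if_neg (hx i)]
  apply ENNReal.ofReal_le_ofReal
  obtain ⟨ε, hε, hri⟩ := hr i
  have : Nonempty (Fin d) := ⟨i⟩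
  have hd0 : 0 < d := i.pos
  have hd : (0 : ℝ) < d := by exact_mod_cast hd0
  have hmin : lminf (centr x) ≤ |centr x i| :=
    ciInf_le (Set.finite_range _).bddBelow i
  have hpos : 0 < lminf (centr x) := by
    obtain ⟨j, hj⟩ := exists_eq_ciInf_of_finite (f := fun i => |centr x i|)
    have : lminf (centr x) = |centr x j| := hj.symm
    rw [this]
    exact abs_pos.mpr (hx j)
  have hL : 0 ≤ l1 x := Finset.sum_nonneg fun _ _ => abs_nonneg _
  obtain ⟨hs1, hs2⟩ := flSumL_err u hu _ _ hs
  rw [List.map_ofFn, List.sum_ofFn, List.sum_ofFn, List.length_ofFn] at hs1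
  rw [List.map_ofFn, List.sum_ofFn, List.sum_ofFn] at hs2
  change |s - ∑ i, x i| ≤ ((1 + u) ^ (d - 1) - 1) * l1 x at hs1
  change |∑ i, x i| ≤ l1 x at hs2
  have h1u : ∀ t : ℝ, |t| ≤ u → |1 + t| ≤ 1 + u := fun t ht =>
    (abs_add_le _ _).trans (by simpa using ht)
  have hP : (1 : ℝ) ≤ (1 + u) ^ (d - 1) := one_le_pow₀ (by linarith)
  have hPd : (1 + u) ^ d = (1 + u) ^ (d - 1) * (1 + u) := by
    rw [← pow_succ, Nat.sub_add_cancel hd0]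
  have hsum : |s * (1 + δ) - ∑ i, x i| ≤ (d * u + K * u ^ 2) * l1 x := by
    have e : s * (1 + δ) - ∑ i, x i = (∑ i, x i) * δ + (s - ∑ i, x i) * (1 + δ) := by ring
    rw [e]
    calc _ ≤ |∑ i, x i| * |δ| + |s - ∑ i, x i| * |1 + δ| := by
          rw [← abs_mul, ← abs_mul]; exact abs_add_le _ _
      _ ≤ l1 x * u + (((1 + u) ^ (d - 1) - 1) * l1 x) * (1 + u) := by
          have : 0 ≤ ((1 + u) ^ (d - 1) - 1) * l1 x := mul_nonneg (by linarith) hL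
          have := h1u δ hδ
          gcongr
      _ = ((1 + u) ^ d - 1) * l1 x := by rw [hPd]; ring
      _ ≤ _ := mul_le_mul_of_nonneg_right (hpow u hu hu1) hL
  set m := s / d * (1 + δ) with hm
  have hmean : |meanv x - m| ≤ (d * u + K * u ^ 2) * (l1 x / d) := by
    have e : meanv x - m = -((s * (1 + δ) - ∑ i, x i) / d) := by
      rw [hm, meanv]; ring
    rw [e, abs_neg, abs_div, abs_of_pos hd, ← mul_div_assoc]
    gcongr
  have hnum : |r i - centr x i| ≤
      |centr x i| * u + (l1 x * u + (2 * K + d) * (l1 x / d) * u ^ 2) := by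
    have e : r i - centr x i = centr x i * ε + (meanv x - m) * (1 + ε) := by
      rw [hri, centr]; ring
    rw [e]
    calc _ ≤ |centr x i| * |ε| + |meanv x - m| * |1 + ε| := by
          rw [← abs_mul, ← abs_mul]; exact abs_add_le _ _
      _ ≤ |centr x i| * u + ((d * u + K * u ^ 2) * (l1 x / d)) * (1 + u) := by
          have := h1u ε hε
          gcongr
      _ ≤ _ := by
          have h0 : 0 ≤ l1 x / d := by positivity
          have h3 : 0 ≤ K * u ^ 2 * (1 - u) * (l1 x / d) :=
            mul_nonneg (mul_nonneg (by positivity) (by linarith)) h0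
          have h4 : l1 x * u = d * u * (l1 x / d) := by field_simp
          rw [h4]
          linarith
  have hc : 0 < |centr x i| := abs_pos.mpr (hx i)
  calc |r i - centr x i| / |centr x i|
      ≤ (|centr x i| * u + (l1 x * u + (2 * K + d) * (l1 x / d) * u ^ 2)) / |centr x i| := by
        gcongr
    _ = u + (l1 x * u + (2 * K + d) * (l1 x / d) * u ^ 2) / |centr x i| := by
        rw [add_div, mul_div_cancel_left₀ _ hc.ne']
    _ ≤ u + (l1 x * u + (2 * K + d) * (l1 x / d) * u ^ 2) / lminf (centr x) := by
        gcongr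
    _ = _ := by ring

end TR
end
end

section
/- Let x ∈ ℝ^d satisfy ‖c̊(x)‖_{−∞} > 2(1+u)γ_d‖x‖_∞, where c̊(x) = x − μ(x)e. Then the floating-point evaluation of the layer normalization N(x) = (x − μ(x)e)/√ν(x) satisfies, for all sufficiently small u: ρ_c( fl(N(x)), N(x) ) ≤ ( d/2 + 5 + 2‖x‖₁/‖c̊(x)‖_{−∞} ) u + C u² for a constant C independent of u. -/
open scoped BigOperators ENNReal

noncomputable section

namespace TR

/-- `a = b * w` with `w ∈ [exp (-t), exp t]`. -/
def MR (t a b : ℝ) : Prop := ∃ w, Real.exp (-t) ≤ w ∧ w ≤ Real.exp t ∧ a = b * w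

theorem MR.trans {t s a b c : ℝ} (h : MR t a b) (h' : MR s b c) : MR (t + s) a c := by
  obtain ⟨w, h1, h2, rfl⟩ := h
  obtain ⟨w', h1', h2', rfl⟩ := h'
  have p := Real.exp_pos (-t)
  have p' := Real.exp_pos (-s)
  refine ⟨w' * w, ?_, ?_, by ring⟩
  · rw [neg_add, Real.exp_add, mul_comm]
    exact mul_le_mul h1' h1 p.le (by linarith)
  · rw [Real.exp_add, mul_comm (Real.exp t)]
    exact mul_le_mul h2' h2 (by linarith) (by positivity)

theorem MR.mul {t s a b a' b' : ℝ} (h : MR t a b) (h' : MR s a' b') :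
    MR (t + s) (a * a') (b * b') := by
  have h1 : MR t (a * a') (b * a') := by
    obtain ⟨w, h1, h2, rfl⟩ := h
    exact ⟨w, h1, h2, by ring⟩
  have h2 : MR s (b * a') (b * b') := by
    obtain ⟨w, k1, k2, rfl⟩ := h'
    exact ⟨w, k1, k2, by ring⟩
  exact h1.trans h2

theorem MR.inv {t a b : ℝ} (h : MR t a b) : MR t a⁻¹ b⁻¹ := by
  obtain ⟨w, h1, h2, rfl⟩ := h
  have p := Real.exp_pos (-t)
  have hw : 0 < w := by linarith
  refine ⟨w⁻¹, ?_, ?_, by rw [mul_inv]⟩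
  · rw [Real.exp_neg]
    exact inv_anti₀ hw h2
  · have := inv_anti₀ p h1
    rwa [Real.exp_neg, inv_inv] at this

theorem MR.const_mul {t a b : ℝ} (c : ℝ) (h : MR t a b) : MR t (c * a) (c * b) := by
  obtain ⟨w, h1, h2, rfl⟩ := h
  exact ⟨w, h1, h2, by ring⟩

theorem MR.sqrt {t a b : ℝ} (h : MR t a b) : MR (t / 2) (Real.sqrt a) (Real.sqrt b) := by
  obtain ⟨w, h1, h2, rfl⟩ := h
  have p := Real.exp_pos (-t)
  refine ⟨Real.sqrt w, ?_, ?_, Real.sqrt_mul' _ (by linarith)⟩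
  · rw [← neg_div, Real.exp_half]
    exact Real.sqrt_le_sqrt h1
  · rw [Real.exp_half]
    exact Real.sqrt_le_sqrt h2

theorem MR.of_rel {η a b : ℝ} (h0 : 0 ≤ η) (h1 : η ≤ 1 / 2) (h : |a - b| ≤ η * |b|) :
    MR (η + 2 * η ^ 2) a b := by
  by_cases hb : b = 0
  · subst hb
    simp at h
    refine ⟨1, ?_, ?_, by simp [h]⟩
    · rw [Real.exp_le_one_iff]; nlinarith
    · rw [Real.one_le_exp_iff]; nlinarith
  · have hb' : 0 < |b| := abs_pos.mpr hb
    have h2 : |a / b - 1| ≤ η := by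
      have : a / b - 1 = (a - b) / b := by field_simp
      rw [this, abs_div, div_le_iff₀ hb']
      exact h
    rw [abs_le] at h2
    have he := Real.add_one_le_exp (η + 2 * η ^ 2)
    refine ⟨a / b, ?_, ?_, by field_simp⟩
    · rw [Real.exp_neg]
      have h3 : (Real.exp (η + 2 * η ^ 2))⁻¹ ≤ 1 - η := by
        rw [inv_le_comm₀ (Real.exp_pos _) (by linarith)]
        refine le_trans ?_ he
        rw [inv_le_iff_one_le_mul₀ (by linarith)]
        nlinarith [mul_nonneg (sq_nonneg η) (by linarith : 0 ≤ 1 - 2 * η)]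
      linarith
    · nlinarith

theorem MR.of_fp {u a b : ℝ} (h0 : 0 ≤ u) (h1 : u ≤ 1 / 2) (h : Fp u a b) :
    MR (u + 2 * u ^ 2) a b := by
  obtain ⟨δ, hδ, rfl⟩ := h
  refine MR.of_rel h0 h1 ?_
  have : b * (1 + δ) - b = δ * b := by ring
  rw [this, abs_mul]
  exact mul_le_mul_of_nonneg_right hδ (abs_nonneg _)

theorem MR.rel {t a b : ℝ} (h : MR t a b) : |a - b| ≤ (Real.exp t - 1) * |b| := by
  obtain ⟨w, h1, h2, rfl⟩ := h
  have : b * w - b = (w - 1) * b := by ring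
  rw [this, abs_mul]
  refine mul_le_mul_of_nonneg_right ?_ (abs_nonneg _)
  rw [abs_le]
  refine ⟨?_, by linarith⟩
  have e1 := Real.add_one_le_exp t
  have e2 := Real.add_one_le_exp (-t)
  linarith

theorem MR.of_bounds {t a b : ℝ} (ht : 0 ≤ t) (hb : 0 ≤ b) (h1 : Real.exp (-t) * b ≤ a)
    (h2 : a ≤ Real.exp t * b) : MR t a b := by
  rcases hb.eq_or_lt with rfl | hb
  · refine ⟨1, by simpa using ht, by simpa using ht, ?_⟩
    simp at h1 h2 ⊢
    linarith
  · exact ⟨a / b, (le_div_iff₀ hb).mpr h1, (div_le_iff₀ hb).mpr h2, by field_simp⟩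

theorem MR.bounds {t a b : ℝ} (hb : 0 ≤ b) (h : MR t a b) :
    Real.exp (-t) * b ≤ a ∧ a ≤ Real.exp t * b := by
  obtain ⟨w, h1, h2, rfl⟩ := h
  constructor
  · rw [mul_comm]; exact mul_le_mul_of_nonneg_left h1 hb
  · rw [mul_comm _ b]; exact mul_le_mul_of_nonneg_left h2 hb

theorem list_abs_sum (l : List ℝ) : |l.sum| ≤ (l.map abs).sum := by
  induction l with
  | nil => simp
  | cons a l ih =>
    rw [List.sum_cons, List.map_cons, List.sum_cons]
    exact (abs_add_le _ _).trans (by linarith)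

theorem flsum_abs {u v : ℝ} (hu : 0 ≤ u) (huv : u ≤ Real.exp v - 1) {l : List ℝ} {s : ℝ}
    (h : FlSumL u l s) :
    ∀ n : ℕ, l.length ≤ n + 1 →
      |s - l.sum| ≤ (Real.exp (n * v) - 1) * (l.map abs).sum := by
  have hv : 0 ≤ v := by
    have : Real.exp 0 ≤ Real.exp v := by rw [Real.exp_zero]; linarith
    exact Real.exp_le_exp.mp this
  induction h with
  | nil => intro n _; simp
  | single x =>
    intro n _
    simp
    have : 1 ≤ Real.exp (n * v) := Real.one_le_exp (by positivity)
    exact mul_nonneg (by linarith) (abs_nonneg _)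
  | cons x y l s r _ hr ih =>
    intro n hn
    obtain ⟨k, rfl⟩ : ∃ k, n = k + 1 := ⟨n - 1, by simp at hn; omega⟩
    have ih := ih k (by simp at hn ⊢; omega)
    obtain ⟨δ, hδ, rfl⟩ := hr
    rw [List.sum_cons (a := x), List.map_cons, List.sum_cons (a := |x|)]
    have hS : |(y :: l).sum| ≤ ((y :: l).map abs).sum := list_abs_sum _
    generalize (y :: l).sum = S at *
    generalize ((y :: l).map abs).sum = X at *
    have hE : Real.exp (((k + 1 : ℕ) : ℝ) * v) = Real.exp (k * v) * Real.exp v := by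
      rw [← Real.exp_add]; push_cast; ring_nf
    rw [hE]
    have e1 : 1 ≤ Real.exp (k * v) := Real.one_le_exp (by positivity)
    generalize Real.exp (k * v) = E at *
    generalize Real.exp v = W at *
    have : (x + s) * (1 + δ) - (x + S) = (s - S) * (1 + δ) + (x + S) * δ := by ring
    rw [this]
    refine (abs_add_le _ _).trans ?_
    rw [abs_mul, abs_mul]
    have b1 : |1 + δ| ≤ W := by
      rw [abs_le] at hδ ⊢; constructor <;> linarith
    have b2 : |δ| ≤ W - 1 := by linarith
    have b3 : |x + S| ≤ |x| + X := (abs_add_le _ _).trans (by linarith)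
    have hX : 0 ≤ X := le_trans (abs_nonneg _) hS
    have m1 : |s - S| * |1 + δ| ≤ ((E - 1) * X) * W :=
      mul_le_mul ih b1 (abs_nonneg _) (mul_nonneg (by linarith) hX)
    have m2 : |x + S| * |δ| ≤ (|x| + X) * (W - 1) :=
      mul_le_mul b3 b2 (abs_nonneg _) (by positivity)
    have m3 : 0 ≤ |x| * W * (E - 1) :=
      mul_nonneg (mul_nonneg (abs_nonneg _) (by linarith)) (by linarith)
    nlinarith

theorem flsum_nonneg {u v : ℝ} (hv : 0 ≤ v)
    (huv : ∀ a b, Fp u a b → MR v a b) {l : List ℝ} {s : ℝ}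
    (h : FlSumL u l s) :
    ∀ n : ℕ, l.length ≤ n + 1 → (∀ a ∈ l, 0 ≤ a) → MR (n * v) s l.sum := by
  induction h with
  | nil =>
    intro n _ _
    exact MR.of_bounds (by positivity) (by simp) (by simp) (by simp)
  | single x =>
    intro n _ hx
    have h0 : (0:ℝ) ≤ n * v := by positivity
    exact ⟨1, by simpa using h0, by simpa using h0, by simp⟩
  | cons x y l s r _ hr ih =>
    intro n hn hpos
    obtain ⟨k, rfl⟩ : ∃ k, n = k + 1 := ⟨n - 1, by simp at hn; omega⟩
    have hl : ∀ a ∈ y :: l, 0 ≤ a := fun a ha => hpos a (List.mem_cons_of_mem _ ha)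
    have ih := ih k (by simp at hn ⊢; omega) hl
    have hx : 0 ≤ x := hpos x List.mem_cons_self
    have hS : 0 ≤ (y :: l).sum := List.sum_nonneg hl
    rw [List.sum_cons (a := x)]
    generalize (y :: l).sum = S at *
    have h0 : (0:ℝ) ≤ k * v := by positivity
    have e1 : 1 ≤ Real.exp (k * v) := Real.one_le_exp h0
    have e2 : Real.exp (-(k * v)) ≤ 1 := Real.exp_le_one_iff.mpr (by linarith)
    obtain ⟨b1, b2⟩ := ih.bounds hS
    have := (huv _ _ hr).trans
      (MR.of_bounds (a := x + s) (b := x + S) h0 (by linarith) (by nlinarith) (by nlinarith))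
    convert this using 1
    push_cast; ring

theorem MR.sum {d : ℕ} {t : ℝ} (ht : 0 ≤ t) {f g : Fin d → ℝ} (hg : ∀ i, 0 ≤ g i)
    (h : ∀ i, MR t (f i) (g i)) : MR t (∑ i, f i) (∑ i, g i) := by
  refine MR.of_bounds ht (Finset.sum_nonneg fun i _ => hg i) ?_ ?_
  · rw [Finset.mul_sum]
    exact Finset.sum_le_sum fun i _ => ((h i).bounds (hg i)).1
  · rw [Finset.mul_sum]
    exact Finset.sum_le_sum fun i _ => ((h i).bounds (hg i)).2

theorem fl_core {n : ℕ} (x : Fin (n + 1) → ℝ) (a u v η : ℝ) (ha : 0 < a)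
    (hca : ∀ i, a ≤ |centr x i|) (hu : 0 ≤ u) (hu1 : u ≤ 1 / 2) (hv : v = u + 2 * u ^ 2)
    (hη : η = (Real.exp ((n + 1) * v) - 1) * (l1 x / a / (n + 1))) (hη1 : η ≤ 1 / 2)
    (r : Fin (n + 1) → ℝ) (h : FlLN u x r) (i : Fin (n + 1)) :
    |r i - layerN x i| ≤
      (Real.exp (2 * (η + 2 * η ^ 2) + 5 * v + (n + 1) * v / 2) - 1) * |layerN x i| := by
  have hv0 : 0 ≤ v := by rw [hv]; positivity
  have hfp : ∀ a b, Fp u a b → MR v a b := fun a b h => hv ▸ MR.of_fp hu hu1 h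
  have huv : u ≤ Real.exp v - 1 := by
    have := Real.add_one_le_exp v
    nlinarith
  obtain ⟨c, ⟨s, m, hs, hm, hc⟩, nrm, ⟨sq, hsq, q, hq, hnrm⟩, hr⟩ := h
  have hX : 0 ≤ l1 x := Finset.sum_nonneg fun i _ => abs_nonneg _
  have hη0 : 0 ≤ η := by
    rw [hη]
    have : 1 ≤ Real.exp ((n + 1) * v) := Real.one_le_exp (by positivity)
    exact mul_nonneg (by linarith) (by positivity)
  -- mean
  have hs1 : |s - ∑ i, x i| ≤ (Real.exp (n * v) - 1) * l1 x := by
    have := flsum_abs hu huv hs n (by simp)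
    rw [List.map_ofFn, List.sum_ofFn, List.sum_ofFn] at this
    exact this
  have hS : |∑ i, x i| ≤ l1 x := Finset.abs_sum_le_sum_abs _ _
  have hm1 : |m - meanv x| ≤ η * a := by
    obtain ⟨δ, hδ, rfl⟩ := hm
    unfold meanv
    have hd : (0:ℝ) < ((n + 1 : ℕ) : ℝ) := by positivity
    generalize (∑ i, x i) = S at *
    have e : s / ((n + 1 : ℕ) : ℝ) * (1 + δ) - S / ((n + 1 : ℕ) : ℝ)
        = ((s - S) * (1 + δ) + S * δ) / ((n + 1 : ℕ) : ℝ) := by ring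
    have e' : η * a = (Real.exp ((n + 1) * v) - 1) * l1 x / ((n + 1 : ℕ) : ℝ) := by
      rw [hη]; push_cast; field_simp
    rw [e, e', abs_div, abs_of_pos hd]
    refine div_le_div_of_nonneg_right ?_ hd.le
    refine (abs_add_le _ _).trans ?_
    rw [abs_mul, abs_mul]
    have hE : Real.exp (((n : ℝ) + 1) * v) = Real.exp (n * v) * Real.exp v := by
      rw [← Real.exp_add]; ring_nf
    rw [hE]
    have e1 : 1 ≤ Real.exp (n * v) := Real.one_le_exp (by positivity)
    generalize Real.exp (n * v) = E at *
    generalize Real.exp v = W at *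
    have b1 : |1 + δ| ≤ W := by
      rw [abs_le] at hδ ⊢; constructor <;> linarith
    have m1 : |s - S| * |1 + δ| ≤ ((E - 1) * l1 x) * W :=
      mul_le_mul hs1 b1 (abs_nonneg _) (mul_nonneg (by linarith) hX)
    have m2 : |S| * |δ| ≤ l1 x * (W - 1) :=
      mul_le_mul hS (by linarith) (abs_nonneg _) hX
    nlinarith
  -- centred vector
  set t := v + (η + 2 * η ^ 2) with ht
  have ht0 : 0 ≤ t := by positivity
  have hcc : ∀ i, MR t (c i) (centr x i) := by
    intro i
    refine (hfp _ _ (hc i)).trans (MR.of_rel hη0 hη1 ?_)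
    have : x i - m - centr x i = -(m - meanv x) := by unfold centr; ring
    rw [this, abs_neg]
    exact hm1.trans (mul_le_mul_of_nonneg_left (hca i) hη0)
  -- norm
  have hq1 : MR (n * v) q (∑ i, sq i) := by
    have hpos : ∀ i, 0 ≤ sq i := fun i => by
      have h0 := mul_self_nonneg (c i)
      exact le_trans (mul_nonneg (Real.exp_pos _).le h0) ((hfp _ _ (hsq i)).bounds h0).1
    have := flsum_nonneg hv0 hfp hq n (by simp) (by
      intro a ha
      obtain ⟨j, rfl⟩ := (List.mem_ofFn' sq a).mp ha
      exact hpos j)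
    rwa [List.sum_ofFn] at this
  have hq2 : MR (v + (t + t)) (∑ i, sq i) (∑ i, centr x i ^ 2) := by
    refine MR.sum (by positivity) (fun i => sq_nonneg _) fun i => ?_
    rw [pow_two]
    exact (hfp _ _ (hsq i)).trans ((hcc i).mul (hcc i))
  have hn := (hfp _ _ hnrm).trans (hq1.trans hq2).sqrt
  obtain ⟨w, hw, hrw⟩ := hr i
  have hw1 := (hfp _ _ hw).trans ((hcc i).const_mul (Real.sqrt ((n + 1 : ℕ) : ℝ)))
  rw [div_eq_mul_inv] at hrw
  have hfin := (hfp _ _ hrw).trans (hw1.mul hn.inv)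
  have hN : layerN x i = Real.sqrt ((n + 1 : ℕ) : ℝ) * centr x i *
      (Real.sqrt (∑ i, centr x i ^ 2))⁻¹ := by
    simp [layerN, rmsN, l2, div_eq_mul_inv]
  rw [← hN] at hfin
  have := hfin.rel
  convert this using 4
  rw [ht]; ring

/-- `0 ≤ f u ≤ a u + O(u²)` as `u → 0⁺`. -/
def QB (f : ℝ → ℝ) (a : ℝ) : Prop :=
  ∃ B, 0 ≤ B ∧ ∀ᶠ u in nhdsWithin (0:ℝ) (Set.Ioi 0), 0 ≤ f u ∧ f u ≤ a * u + B * u ^ 2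

theorem QB.small {f : ℝ → ℝ} {a : ℝ} (h : QB f a) {ε : ℝ} (hε : 0 < ε) :
    ∀ᶠ u in nhdsWithin (0:ℝ) (Set.Ioi 0), f u ≤ ε := by
  obtain ⟨B, _, hB⟩ := h
  have hc : Filter.Tendsto (fun u : ℝ => a * u + B * u ^ 2) (nhdsWithin 0 (Set.Ioi 0))
      (nhds 0) := by
    have : Continuous (fun u : ℝ => a * u + B * u ^ 2) := by fun_prop
    have h := this.tendsto 0
    simp at h
    exact h.mono_left nhdsWithin_le_nhds
  filter_upwards [hB, hc.eventually (gt_mem_nhds hε)] with u h1 h2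
  linarith [h1.2]

theorem QB.add {f g : ℝ → ℝ} {a b : ℝ} (hf : QB f a) (hg : QB g b) :
    QB (fun u => f u + g u) (a + b) := by
  obtain ⟨B, hB0, hB⟩ := hf
  obtain ⟨C, hC0, hC⟩ := hg
  refine ⟨B + C, by positivity, ?_⟩
  filter_upwards [hB, hC] with u h1 h2
  constructor <;> linarith [h1.1, h1.2, h2.1, h2.2]

theorem QB.smul {f : ℝ → ℝ} {a : ℝ} (hf : QB f a) {c : ℝ} (hc : 0 ≤ c) :
    QB (fun u => c * f u) (c * a) := by
  obtain ⟨B, hB0, hB⟩ := hf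
  refine ⟨c * B, by positivity, ?_⟩
  filter_upwards [hB] with u h1
  refine ⟨mul_nonneg hc h1.1, ?_⟩
  have := mul_le_mul_of_nonneg_left h1.2 hc
  linarith

theorem QB.sq {f : ℝ → ℝ} {a : ℝ} (hf : QB f a) : QB (fun u => f u ^ 2) 0 := by
  obtain ⟨B, hB0, hB⟩ := hf
  refine ⟨(|a| + B) ^ 2, by positivity, ?_⟩
  filter_upwards [hB, self_mem_nhdsWithin,
    nhdsWithin_le_nhds (gt_mem_nhds (zero_lt_one' ℝ))] with u h1 h0 h2
  have h0 : 0 < u := h0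
  have h2 : u < 1 := h2
  refine ⟨sq_nonneg _, ?_⟩
  have : f u ≤ (|a| + B) * u := by
    have e1 : a * u ≤ |a| * u := mul_le_mul_of_nonneg_right (le_abs_self a) h0.le
    have e2 : B * u ^ 2 ≤ B * u := mul_le_mul_of_nonneg_left (by nlinarith) hB0
    linarith [h1.2]
  have := pow_le_pow_left₀ h1.1 this 2
  linarith [mul_pow (|a| + B) u 2]

theorem QB.exp {f : ℝ → ℝ} {a : ℝ} (hf : QB f a) : QB (fun u => Real.exp (f u) - 1) a := by
  obtain ⟨B, hB0, hB⟩ := hf.add hf.sq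
  refine ⟨B, hB0, ?_⟩
  obtain ⟨B', _, hB'⟩ := hf
  filter_upwards [hB, hB', QB.small ⟨B', ‹_›, hB'⟩ one_pos] with u h1 h2 h3
  have e1 := Real.add_one_le_exp (f u)
  have e2 := Real.abs_exp_sub_one_sub_id_le (x := f u) (abs_le.mpr ⟨by linarith [h2.1], h3⟩)
  have e3 := (abs_le.mp e2).2
  constructor <;> linarith [h1.1, h1.2, h2.1]

theorem QB.id : QB (fun u => u) 1 := by
  refine ⟨0, le_rfl, ?_⟩
  filter_upwards [self_mem_nhdsWithin] with u h0
  have h0 : 0 < u := h0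
  constructor <;> linarith

theorem QB.quad {f : ℝ → ℝ} {a : ℝ} (hf : QB f a) : QB (fun u => f u + 2 * f u ^ 2) a := by
  have := hf.add (hf.sq.smul (c := 2) (by norm_num))
  simpa using this

/-- forward rounding error of the layer normalization. -/
theorem layer_normalization_rounding {d : ℕ} (x : Fin d → ℝ) :
    ∃ C u0 : ℝ, 0 < u0 ∧ ∀ u : ℝ, 0 < u → u ≤ u0 →
      lminf (centr x) > 2 * (1 + u) * gam d u * linf x →
      ∀ r : Fin d → ℝ, FlLN u x r →
        rhoV r (layerN x) ≤ ENNReal.ofReal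
          (((d : ℝ) / 2 + 5 + 2 * l1 x / lminf (centr x)) * u + C * u ^ 2) := by
  have hnn : 0 ≤ lminf (centr x) := Real.iInf_nonneg fun i => abs_nonneg _
  rcases hnn.eq_or_lt with h0 | ha
  · refine ⟨0, 1 / ((d : ℝ) + 1), by positivity, ?_⟩
    intro u hu hu0 hgt
    exfalso
    rw [← h0] at hgt
    have hl : 0 ≤ linf x := Real.iSup_nonneg fun i => abs_nonneg _
    have hdu : (d : ℝ) * u ≤ 1 := by
      rw [le_div_iff₀ (by positivity)] at hu0
      linarith
    have hg : 0 ≤ gam d u := div_nonneg (by positivity) (by linarith)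
    have : 0 ≤ 2 * (1 + u) * gam d u * linf x := by positivity
    linarith
  · obtain _ | n := d
    · simp [lminf] at ha
    have hX : 0 ≤ l1 x := Finset.sum_nonneg fun i _ => abs_nonneg _
    set a := lminf (centr x) with hadef
    have hca : ∀ i, a ≤ |centr x i| := fun i =>
      ciInf_le (f := fun i => |centr x i|) (Set.finite_range _).bddBelow i
    have qv : QB (fun u => u + 2 * u ^ 2) 1 := QB.id.quad
    have qη := (qv.smul (c := (n : ℝ) + 1) (by positivity)).exp.smul
      (c := l1 x / a / (n + 1)) (by positivity)
    have qT := (((qη.quad.smul (c := 2) (by norm_num)).add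
      (qv.smul (c := 5) (by norm_num))).add (qv.smul (c := ((n : ℝ) + 1) / 2) (by positivity))).exp
    have hsm := qη.small (ε := 1 / 2) (by norm_num)
    obtain ⟨C, _, hC⟩ := qT
    have hh : ∀ᶠ u : ℝ in nhdsWithin 0 (Set.Ioi 0), u < 1 / 2 :=
      nhdsWithin_le_nhds (gt_mem_nhds (by norm_num))
    obtain ⟨u0, hu0, hsub⟩ := mem_nhdsGT_iff_exists_Ioc_subset.mp (hC.and (hsm.and hh))
    refine ⟨C, u0, hu0, ?_⟩
    intro u hu huu0 _ r hr
    obtain ⟨⟨_, h1⟩, h2, h3⟩ := hsub ⟨hu, huu0⟩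
    have h3 : u < 1 / 2 := h3
    have key := fl_core x a u (u + 2 * u ^ 2) _ ha hca hu.le h3.le rfl rfl
      (by linarith [h2]) r hr
    unfold rhoV
    refine iSup_le fun i => ?_
    have hi := key i
    split_ifs with hz hz'
    · simp
    · rw [hz] at hi
      simp at hi
      exact absurd hi hz'
    · refine ENNReal.ofReal_le_ofReal ?_
      rw [div_le_iff₀ (abs_pos.mpr hz)]
      refine hi.trans (mul_le_mul_of_nonneg_right ?_ (abs_nonneg _))
      refine le_trans (le_of_eq ?_) (h1.trans (le_of_eq ?_))
      · ring_nf
      · push_cast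
        field_simp
        ring

end TR
end
end

section
/- Let x ∈ ℝ^d be nonzero. The floating-point evaluation of the RMS layer normalization R(x) = √d · x/‖x‖₂ satisfies, for all sufficiently small u: ρ_c( fl(R(x)), R(x) ) ≤ (d/2 + 3) u + C u² for a constant C depending only on d (in particular, R is evaluated in a forward-stable manner). -/
open scoped BigOperators ENNReal

noncomputable section

namespace TR

theorem aux_one_sub {u : ℝ} (h0 : 0 ≤ u) (h1 : u ≤ 1 / 2) : Real.exp (-(u + u ^ 2)) ≤ 1 - u := by
  rw [Real.exp_neg]
  have hq := Real.quadratic_le_exp_of_nonneg (x := u + u ^ 2) (by positivity)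
  have hp : 0 < 1 - u := by linarith
  rw [inv_le_comm₀ (Real.exp_pos _) hp]
  refine le_trans ?_ hq
  rw [inv_le_iff_one_le_mul₀ hp]
  have h2 : u ≤ (1 + u) ^ 2 * (1 - u) / 2 := by nlinarith [mul_nonneg h0 (sub_nonneg.2 h1)]
  nlinarith [mul_le_mul_of_nonneg_left h2 (sq_nonneg u)]

theorem aux_delta {u δ : ℝ} (h0 : 0 ≤ u) (h1 : u ≤ 1 / 2) (hd : |δ| ≤ u) :
    Real.exp (-(u + u ^ 2)) ≤ 1 + δ ∧ 1 + δ ≤ Real.exp (u + u ^ 2) := by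
  obtain ⟨h2, h3⟩ := abs_le.1 hd
  refine ⟨(aux_one_sub h0 h1).trans (by linarith), ?_⟩
  have := Real.add_one_le_exp (u + u ^ 2)
  nlinarith [sq_nonneg u]

theorem aux_mul {a p q x y : ℝ} (hx : Real.exp (-p) ≤ x ∧ x ≤ Real.exp p)
    (hy : Real.exp (-q) ≤ y ∧ y ≤ Real.exp q) (ha : a = p + q) :
    Real.exp (-a) ≤ x * y ∧ x * y ≤ Real.exp a := by
  subst ha
  have e1 := Real.exp_pos (-p)
  have e2 := Real.exp_pos (-q)
  rw [neg_add, Real.exp_add, Real.exp_add]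
  exact ⟨mul_le_mul hx.1 hy.1 e2.le (e1.le.trans hx.1),
    mul_le_mul hx.2 hy.2 (e2.le.trans hy.1) (Real.exp_pos _).le⟩

theorem aux_inv {p x : ℝ} (hx : Real.exp (-p) ≤ x ∧ x ≤ Real.exp p) :
    Real.exp (-p) ≤ x⁻¹ ∧ x⁻¹ ≤ Real.exp p := by
  have hpos : 0 < x := (Real.exp_pos _).trans_le hx.1
  constructor
  · rw [Real.exp_neg]
    exact inv_anti₀ hpos hx.2
  · have := inv_anti₀ (Real.exp_pos _) hx.1
    rwa [← Real.exp_neg, neg_neg] at this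

theorem aux_sum_s16 {u : ℝ} (h0 : 0 ≤ u) (h1 : u ≤ 1 / 2) {l : List ℝ} {r : ℝ} (h : FlSumL u l r) :
    (∀ y ∈ l, 0 ≤ y) →
    Real.exp (-(((l.length : ℝ) - 1) * (u + u ^ 2))) * l.sum ≤ r ∧
      r ≤ Real.exp (((l.length : ℝ) - 1) * (u + u ^ 2)) * l.sum := by
  induction h with
  | nil => intro _; simp
  | single x => intro _; simp
  | cons x y l s r hs hr ih =>
    intro hn
    have hx : 0 ≤ x := hn x (by simp)
    obtain ⟨i1, i2⟩ := ih (fun z hz => hn z (List.mem_cons_of_mem _ hz))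
    have hS : 0 ≤ (y :: l).sum := List.sum_nonneg (fun z hz => hn z (List.mem_cons_of_mem _ hz))
    obtain ⟨δ, hδ, rfl⟩ := hr
    obtain ⟨d1, d2⟩ := aux_delta h0 h1 hδ
    have hlen : (((x :: y :: l).length : ℝ) - 1) = (((y :: l).length : ℝ) - 1) + 1 := by
      simp
    rw [hlen, List.sum_cons]
    generalize (y :: l).sum = S at *
    have hm : (0 : ℝ) ≤ ((y :: l).length : ℝ) - 1 := by simp
    generalize ((y :: l).length : ℝ) - 1 = m at *
    have ha : 0 ≤ u + u ^ 2 := by positivity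
    generalize u + u ^ 2 = a at *
    have hma : 0 ≤ m * a := mul_nonneg hm ha
    rw [add_mul, one_mul, neg_add, Real.exp_add, Real.exp_add]
    have e1 : Real.exp (-(m * a)) ≤ 1 := Real.exp_le_one_iff.2 (by linarith)
    have e2 : 1 ≤ Real.exp (m * a) := Real.one_le_exp hma
    have l1 : Real.exp (-(m * a)) * (x + S) ≤ x + s := by nlinarith
    have l2 : x + s ≤ Real.exp (m * a) * (x + S) := by nlinarith
    have p1 : 0 ≤ Real.exp (-(m * a)) * (x + S) := by positivity
    constructor
    · calc _ = Real.exp (-(m * a)) * (x + S) * Real.exp (-a) := by ring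
        _ ≤ _ := mul_le_mul l1 d1 (Real.exp_pos _).le (p1.trans l1)
    · calc _ ≤ Real.exp (m * a) * (x + S) * Real.exp a :=
            mul_le_mul l2 d2 ((Real.exp_pos _).le.trans d1) (by positivity)
        _ = _ := by ring

theorem aux_norm {d : ℕ} {u : ℝ} (h0 : 0 ≤ u) (h1 : u ≤ 1 / 2) {x : Fin d → ℝ} {n : ℝ}
    (hx : 0 < ∑ i, x i ^ 2) (h : FlL2 u x n) :
    ∃ q : ℝ, n = l2 x * q ∧ Real.exp (-(((d : ℝ) / 2 + 1) * (u + u ^ 2))) ≤ q ∧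
      q ≤ Real.exp (((d : ℝ) / 2 + 1) * (u + u ^ 2)) := by
  obtain ⟨sq, hsq, s, hs, δ, hδ, rfl⟩ := h
  have hb : ∀ i, Real.exp (-(u + u ^ 2)) * x i ^ 2 ≤ sq i ∧
      sq i ≤ Real.exp (u + u ^ 2) * x i ^ 2 := by
    intro i
    obtain ⟨ε, hε, he⟩ := hsq i
    obtain ⟨d1, d2⟩ := aux_delta h0 h1 hε
    have := sq_nonneg (x i)
    rw [he]
    constructor <;> nlinarith
  have hnn : ∀ i, 0 ≤ sq i := fun i => le_trans (by positivity) (hb i).1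
  have hsum := aux_sum_s16 h0 h1 hs (by
    intro y hy
    obtain ⟨i, rfl⟩ := (List.mem_ofFn' _ _).1 hy
    exact hnn i)
  rw [List.length_ofFn, List.sum_ofFn] at hsum
  have s1 : Real.exp (-(u + u ^ 2)) * ∑ i, x i ^ 2 ≤ ∑ i, sq i := by
    rw [Finset.mul_sum]; exact Finset.sum_le_sum fun i _ => (hb i).1
  have s2 : ∑ i, sq i ≤ Real.exp (u + u ^ 2) * ∑ i, x i ^ 2 := by
    rw [Finset.mul_sum]; exact Finset.sum_le_sum fun i _ => (hb i).2
  have t1 : Real.exp (-(d * (u + u ^ 2))) * ∑ i, x i ^ 2 ≤ s := by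
    refine le_trans ?_ hsum.1
    calc _ = Real.exp (-(((d : ℝ) - 1) * (u + u ^ 2))) *
          (Real.exp (-(u + u ^ 2)) * ∑ i, x i ^ 2) := by
          rw [← mul_assoc, ← Real.exp_add]; ring_nf
      _ ≤ _ := by gcongr
  have t2 : s ≤ Real.exp (d * (u + u ^ 2)) * ∑ i, x i ^ 2 := by
    refine le_trans hsum.2 ?_
    calc _ ≤ Real.exp (((d : ℝ) - 1) * (u + u ^ 2)) *
          (Real.exp (u + u ^ 2) * ∑ i, x i ^ 2) := by gcongr
      _ = _ := by
          rw [← mul_assoc, ← Real.exp_add]; ring_nf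
  refine ⟨Real.sqrt (s / ∑ i, x i ^ 2) * (1 + δ), ?_, ?_⟩
  · unfold l2
    rw [← mul_assoc, ← Real.sqrt_mul hx.le, mul_div_cancel₀ _ hx.ne']
  · refine aux_mul (p := (d : ℝ) / 2 * (u + u ^ 2)) (q := u + u ^ 2) ⟨?_, ?_⟩
      (aux_delta h0 h1 hδ) (by ring)
    · apply Real.le_sqrt_of_sq_le
      rw [le_div_iff₀ hx, ← Real.exp_nat_mul]
      refine le_trans (le_of_eq ?_) t1
      congr 2; push_cast; ring
    · rw [Real.sqrt_le_left (Real.exp_pos _).le, div_le_iff₀ hx, ← Real.exp_nat_mul]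
      refine le_trans t2 (le_of_eq ?_)
      congr 2; push_cast; ring

theorem aux_final {k u q : ℝ} (hk : 1 ≤ k) (h0 : 0 < u) (h1 : u ≤ 1 / (2 * k))
    (hq : Real.exp (-(k * (u + u ^ 2))) ≤ q ∧ q ≤ Real.exp (k * (u + u ^ 2))) :
    |q - 1| ≤ k * u + (k + 4 * k ^ 2) * u ^ 2 := by
  have hk0 : 0 < k := by linarith
  have hu : u * (2 * k) ≤ 1 := (le_div_iff₀ (by positivity)).1 h1
  have hu1 : u ≤ 1 := by nlinarith
  have ht : k * (u + u ^ 2) ≤ 2 * k * u := by nlinarith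
  have ht0 : 0 ≤ k * (u + u ^ 2) := by positivity
  have ht1 : |k * (u + u ^ 2)| ≤ 1 := by rw [abs_of_nonneg ht0]; linarith
  have he := (abs_le.1 (Real.abs_exp_sub_one_sub_id_le ht1)).2
  have hsq : (k * (u + u ^ 2)) ^ 2 ≤ (2 * k * u) ^ 2 := by gcongr
  have hl := Real.add_one_le_exp (-(k * (u + u ^ 2)))
  have hku : 0 ≤ k ^ 2 * u ^ 2 := by positivity
  rw [abs_le]
  constructor
  · nlinarith [hq.1]
  · nlinarith [hq.2]

/-- RMS layer normalization is evaluated in a forward-stable manner: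
for every nonzero `x` and all sufficiently small `u`,
`ρ_c(fl(R(x)), R(x)) ≤ (d/2 + 3)u + C u²` with `C` depending only on `d`. -/
theorem rms_normalization_rounding (d : ℕ) :
    ∃ C u0 : ℝ, 0 < u0 ∧ ∀ x : Fin d → ℝ, x ≠ 0 → ∀ u : ℝ, 0 < u → u ≤ u0 →
      ∀ r : Fin d → ℝ, FlRMS u x r →
        rhoV r (rmsN x) ≤ ENNReal.ofReal (((d : ℝ) / 2 + 3) * u + C * u ^ 2) := by
  have hk : (1 : ℝ) ≤ (d : ℝ) / 2 + 3 := by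
    have : (0 : ℝ) ≤ d := Nat.cast_nonneg d
    linarith
  refine ⟨((d : ℝ) / 2 + 3) + 4 * ((d : ℝ) / 2 + 3) ^ 2, 1 / (2 * ((d : ℝ) / 2 + 3)),
    by positivity, ?_⟩
  intro x hx u h0 hu r hr
  have hu2 : u ≤ 1 / 2 := hu.trans (by
    apply one_div_le_one_div_of_le <;> linarith)
  have hS : 0 < ∑ i, x i ^ 2 := by
    obtain ⟨i, hi⟩ := Function.ne_iff.1 hx
    have hi' : x i ≠ 0 := hi
    exact Finset.sum_pos' (fun j _ => sq_nonneg _) ⟨i, Finset.mem_univ i, by positivity⟩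
  obtain ⟨n, hn, ht⟩ := hr
  obtain ⟨q, rfl, hq⟩ := aux_norm h0.le hu2 hS hn
  unfold rhoV
  refine iSup_le fun i => ?_
  obtain ⟨t, ⟨δ₁, hδ₁, rfl⟩, δ₂, hδ₂, hri⟩ := ht i
  have hQ := aux_mul (aux_mul (aux_delta h0.le hu2 hδ₁) (aux_delta h0.le hu2 hδ₂) rfl)
    (aux_inv hq) (a := ((d : ℝ) / 2 + 3) * (u + u ^ 2)) (by ring)
  have hfin := aux_final hk h0 hu hQ
  have hrr : r i = rmsN x i * ((1 + δ₁) * (1 + δ₂) * q⁻¹) := by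
    rw [hri, rmsN, div_eq_mul_inv, div_eq_mul_inv, mul_inv]; ring
  generalize (1 + δ₁) * (1 + δ₂) * q⁻¹ = Q at *
  split_ifs with h2 h3
  · exact zero_le
  · exact absurd (by rw [hrr, h2, zero_mul]) h3
  · apply ENNReal.ofReal_le_ofReal
    have : r i - rmsN x i = (Q - 1) * rmsN x i := by rw [hrr]; ring
    rw [this, abs_mul, mul_div_cancel_right₀ _ (abs_ne_zero.2 h2)]
    exact hfin

end TR
end
end
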